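/- arXiv:1810.09681 — 2 statements merged into one kernel-verified Lean document; each statement's English description precedes it below -/
import Mathlib

section
/- Let n ≥ 1 be an integer, 0 ≤ k ≤ n, 0 < p < 1, q = 1 − p. Then |∂/∂p F_{n,p}(k+1) − ∂/∂p G_{n,p}(k)| ≤ (1/(pq)) · (c₁/q + c₂), where c₁ = 0.516 and c₂ = 0.121; here ∂/∂p F_{n,p}(k+1) is the derivative in p of p ↦ Σ_{i=0}^{k} C(n,i) p^i q^{n−i}, which equals −n C(n−1,k) p^k q^{n−1−k}, and ∂/∂p G_{n,p}(k) is the derivative in p of p ↦ Φ((k − np)/√(npq)). -/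
/-- The standard normal distribution function Φ. -/
noncomputable def Phi (x : ℝ) : ℝ :=
  (Real.sqrt (2 * Real.pi))⁻¹ * ∫ t in Set.Iio x, Real.exp (-t ^ 2 / 2)

/-!
Write `n = m + 1`, `v = n p q` and `z = (k - n p) / √v`. The sum `F` telescopes under `∂/∂p`, so
`p q ∂F/∂p = -v b` with `b` the binomial probability of `k` successes in `m = n - 1` trials, while
`p q ∂G/∂p = -φ(z) (√v + z (1 - 2p) / 2)`. Since `φ(z) |z| ≤ 0.242`, the second summand costs at
most `0.121`, and it remains to compare `b` with the density `φ(z) / √v` of the normal law with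
mean `n p` and variance `v` at `k`.

For `m ≥ 7` and `v ≥ 0.637` this is a local limit theorem with explicit constants: both numbers are
Fourier integrals, of `ψ ^ m * exp (-i p t)` with `ψ` the characteristic function of a centred
Bernoulli variable, and of `g ^ n` with `g t = exp (-p q t ^ 2 / 2)`. Telescoping `ψ ^ m - g ^ m`
with `|ψ - g| = O(p q |t| ^ 3)` and `|ψ t| ≤ exp (-2 p q t ^ 2 / π ^ 2)` on `[-π, π]` leaves
Gaussian moments. Otherwise `v b` and `φ(z) (√v + z (1 - 2p) / 2)` are so small that they both lie
in the interval `[0, 0.516 / q + 0.121]`.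
-/

open MeasureTheory ProbabilityTheory
open scoped Real Nat NNReal
open Complex (I)

theorem hasDerivAt_sum_range_pow_div_factorial {𝕜 : Type*} [NontriviallyNormedField 𝕜] [CharZero 𝕜]
    (n : ℕ) (z : 𝕜) :
    HasDerivAt (fun z : 𝕜 => ∑ j ∈ Finset.range (n + 1), z ^ j / (j ! : 𝕜))
      (∑ j ∈ Finset.range n, z ^ j / (j ! : 𝕜)) z := by
  have hterm (j : ℕ) :
      HasDerivAt (fun z : 𝕜 => z ^ (j + 1) / ((j + 1)! : 𝕜)) (z ^ j / (j ! : 𝕜)) z := by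
    refine ((hasDerivAt_pow (j + 1) z).div_const _).congr_deriv ?_
    have hj : (j + 1 : 𝕜) ≠ 0 := by exact_mod_cast j.succ_ne_zero
    rw [Nat.factorial_succ]
    push_cast
    rw [mul_div_mul_left _ _ hj]
  simp only [Finset.sum_range_succ', pow_zero]
  exact (HasDerivAt.fun_sum fun j _ => hterm j).add_const _

theorem norm_exp_sub_sum_range_le_of_re_nonpos {z : ℂ} (hz : z.re ≤ 0) (n : ℕ) :
    ‖Complex.exp z - ∑ j ∈ Finset.range n, z ^ j / (j ! : ℂ)‖ ≤ ‖z‖ ^ n / n ! := by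
  induction n generalizing z with
  | zero => simpa [Complex.norm_exp] using hz
  | succ n ih =>
    let remainder (n : ℕ) (s : ℝ) : ℂ :=
      Complex.exp (s * z) - ∑ j ∈ Finset.range n, (s * z) ^ j / (j ! : ℂ)
    have hderiv (s : ℝ) : HasDerivAt (remainder (n + 1)) (z * remainder n s) s := by
      have hmul : HasDerivAt (fun s : ℝ => (s : ℂ) * z) z s := by
        simpa using (hasDerivAt_id s).ofReal_comp.mul_const z
      exact (((Complex.hasDerivAt_exp _).fun_sub
        (hasDerivAt_sum_range_pow_div_factorial n _)).comp s hmul).congr_deriv (mul_comm _ _)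
    have hbound (s : ℝ) (hs : 0 ≤ s) :
        ‖z * remainder n s‖ ≤ ‖z‖ ^ (n + 1) * s ^ n / n ! := by
      have hre : ((s : ℂ) * z).re ≤ 0 := by simpa using mul_nonpos_of_nonneg_of_nonpos hs hz
      calc ‖z * remainder n s‖ ≤ ‖z‖ * (‖(s : ℂ) * z‖ ^ n / n !) := by
            rw [norm_mul]
            exact mul_le_mul_of_nonneg_left (ih hre) (norm_nonneg z)
        _ = _ := by rw [norm_mul, Complex.norm_of_nonneg hs]; ring
    have hmajorant (s : ℝ) : HasDerivAt (fun s => ‖z‖ ^ (n + 1) * s ^ (n + 1) / (n + 1)!)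
        (‖z‖ ^ (n + 1) * s ^ n / n !) s := by
      refine (((hasDerivAt_pow (n + 1) s).const_mul _).div_const _).congr_deriv ?_
      rw [Nat.factorial_succ]
      push_cast
      field_simp
    have h := image_norm_le_of_norm_deriv_right_le_deriv_boundary (a := 0) (b := 1)
      (fun s _ => (hderiv s).continuousAt.continuousWithinAt)
      (fun s _ => (hderiv s).hasDerivWithinAt) (by simp [remainder, Finset.sum_range_succ'])
      hmajorant (fun s hs => hbound s hs.1) ⟨zero_le_one, le_refl 1⟩
    simpa [remainder] using h

theorem norm_pow_sub_pow_le_mul_sum {R : Type*} [NormedCommRing R] [NormOneClass R] {x y : R}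
    {A B : ℝ} (hx : ‖x‖ ≤ A) (hy : ‖y‖ ≤ B) (n : ℕ) :
    ‖x ^ n - y ^ n‖ ≤ ‖x - y‖ * ∑ j ∈ Finset.range n, A ^ j * B ^ (n - 1 - j) := by
  rw [← geom_sum₂_mul, mul_comm]
  refine (norm_mul_le _ _).trans ?_
  gcongr
  refine norm_sum_le_of_le _ fun j _ => (norm_mul_le _ _).trans ?_
  have hA : 0 ≤ A := (norm_nonneg x).trans hx
  gcongr
  · exact (norm_pow_le x j).trans (by gcongr)
  · exact (norm_pow_le y _).trans (by gcongr)

-- The claim telescopes because `1 / y ^ 2 ≤ (1 / (y - d / 2) - 1 / (y + d / 2)) / d`.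
theorem sum_one_div_arith_sq_le {x d : ℝ} (hd : 0 ≤ d) (hx : d / 2 < x) (n : ℕ) :
    ∑ j ∈ Finset.range n, 1 / (x + d * j) ^ 2 ≤ n / ((x - d / 2) * (x + (n - 1 / 2) * d)) := by
  induction n with
  | zero => simp
  | succ n ih =>
    have hmid : 0 < x + (n - 1 / 2) * d := by nlinarith [mul_nonneg n.cast_nonneg hd]
    have hhi : 0 < x + (n + 1 - 1 / 2) * d := by linarith
    have hterm : 1 / (x + d * n) ^ 2 ≤ 1 / ((x + (n - 1 / 2) * d) * (x + (n + 1 - 1 / 2) * d)) :=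
      one_div_le_one_div_of_le (by positivity) (by nlinarith [sq_nonneg d])
    rw [Finset.sum_range_succ]
    push_cast
    calc _ ≤ n / ((x - d / 2) * (x + (n - 1 / 2) * d)) +
          1 / ((x + (n - 1 / 2) * d) * (x + (n + 1 - 1 / 2) * d)) := add_le_add ih hterm
      _ = _ := by
        rw [div_add_div _ _ (by positivity) (by positivity), div_eq_div_iff (by positivity)
          (by positivity)]
        ring

theorem intervalIntegral_le_integral_of_nonneg {f : ℝ → ℝ} (hf : Integrable f) (hnn : 0 ≤ f)
    {a b : ℝ} (hab : a ≤ b) : ∫ t in a..b, f t ≤ ∫ t, f t := by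
  rw [intervalIntegral.integral_of_le hab]
  exact setIntegral_le_integral hf (.of_forall hnn)

theorem integrable_abs_pow_mul_exp_neg_mul_sq {c : ℝ} (hc : 0 < c) (n : ℕ) :
    Integrable fun t : ℝ => |t| ^ n * Real.exp (-c * t ^ 2) := by
  have h := (integrable_rpow_mul_exp_neg_mul_sq hc
    (show (-1 : ℝ) < n by linarith [n.cast_nonneg (α := ℝ)])).norm
  simpa [abs_mul, abs_of_pos (Real.exp_pos _)] using h

theorem integral_abs_pow_odd_mul_exp_neg_mul_sq {c : ℝ} (hc : 0 < c) (k : ℕ) :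
    ∫ t : ℝ, |t| ^ (2 * k + 1) * Real.exp (-c * t ^ 2) = k ! / c ^ (k + 1) := by
  have h := integral_rpow_mul_exp_neg_mul_rpow (p := 2) (q := (2 * k + 1 : ℕ)) two_pos
    (by push_cast; linarith [k.cast_nonneg (α := ℝ)]) hc
  have hexp : (((2 * k + 1 : ℕ) : ℝ) + 1) / 2 = (k + 1 : ℕ) := by push_cast; ring
  have hGamma : Real.Gamma (k + 1 : ℕ) = k ! := by simpa using Real.Gamma_nat_eq_factorial k
  rw [neg_div, hexp, hGamma, Real.rpow_neg hc.le] at h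
  simp only [Real.rpow_natCast, Real.rpow_ofNat] at h
  have habs := integral_comp_abs (f := fun t => t ^ (2 * k + 1) * Real.exp (-c * t ^ 2))
  simp only [sq_abs] at habs
  rw [habs, h]
  field_simp

theorem integral_Ioi_exp_neg_mul_sq_le {c a : ℝ} (hc : 0 < c) (ha : 0 < a) :
    ∫ t in Set.Ioi a, Real.exp (-c * t ^ 2) ≤ Real.exp (-c * a ^ 2) / (2 * c * a) := by
  have hneg : -(2 * c * a) < 0 := neg_neg_of_pos (by positivity)
  have hi : IntegrableOn
      (fun t => Real.exp (c * a ^ 2) * Real.exp (-(2 * c * a) * t)) (Set.Ioi a) :=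
    (integrableOn_exp_mul_Ioi hneg a).const_mul _
  calc ∫ t in Set.Ioi a, Real.exp (-c * t ^ 2)
      ≤ ∫ t in Set.Ioi a, Real.exp (c * a ^ 2) * Real.exp (-(2 * c * a) * t) := by
        refine setIntegral_mono (integrable_exp_neg_mul_sq hc).integrableOn hi fun t => ?_
        rw [← Real.exp_add]
        exact Real.exp_le_exp.2 (by nlinarith [mul_nonneg hc.le (sq_nonneg (t - a))])
    _ = Real.exp (-c * a ^ 2) / (2 * c * a) := by
        rw [integral_const_mul, integral_exp_mul_Ioi hneg, mul_div_assoc', mul_neg,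
          neg_div_neg_eq, ← Real.exp_add]
        ring_nf

theorem norm_integral_sub_intervalIntegral_le {E : Type*} [NormedAddCommGroup E] [NormedSpace ℝ E]
    {g : ℝ → E} {c a : ℝ} (hc : 0 < c) (ha : 0 < a) (hg : AEStronglyMeasurable g)
    (hle : ∀ t, ‖g t‖ ≤ Real.exp (-c * t ^ 2)) :
    ‖(∫ t, g t) - ∫ t in -a..a, g t‖ ≤ Real.exp (-c * a ^ 2) / (c * a) := by
  have hi : Integrable g := (integrable_exp_neg_mul_sq hc).mono' hg (.of_forall hle)
  have htail {h : ℝ → E} (hh : ∀ t, ‖h t‖ ≤ Real.exp (-c * t ^ 2)) :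
      ‖∫ t in Set.Ioi a, h t‖ ≤ Real.exp (-c * a ^ 2) / (2 * c * a) :=
    (norm_integral_le_of_norm_le (integrable_exp_neg_mul_sq hc).integrableOn
      (.of_forall hh)).trans (integral_Ioi_exp_neg_mul_sq_le hc ha)
  have hsplit : (∫ t, g t) - ∫ t in -a..a, g t =
      (∫ t in Set.Ioi a, g (-t)) + ∫ t in Set.Ioi a, g t := by
    rw [integral_comp_neg_Ioi, ← intervalIntegral.integral_Iic_sub_Iic hi.integrableOn
      hi.integrableOn, ← intervalIntegral.integral_Iic_add_Ioi (b := a) hi.integrableOn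
      hi.integrableOn]
    abel
  rw [hsplit]
  calc _ ≤ Real.exp (-c * a ^ 2) / (2 * c * a) + Real.exp (-c * a ^ 2) / (2 * c * a) :=
        norm_add_le_of_le (htail fun t => by simpa using hle (-t)) (htail hle)
    _ = _ := by ring

theorem integral_exp_mul_exp_mul_I_eq_gaussianPDFReal {v : ℝ≥0} (hv : v ≠ 0) (μ x : ℝ) :
    ∫ t : ℝ, (Real.exp (-(v / 2) * t ^ 2) : ℂ) * Complex.exp (((μ - x) * t : ℝ) * I) =
      ((2 * π * gaussianPDFReal μ v x : ℝ) : ℂ) := by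
  have hfourier := fourierIntegral_gaussian (b := ((v / 2 : ℝ) : ℂ))
    (by simpa using pos_iff_ne_zero.2 hv) (μ - x : ℝ)
  have hreorder (t : ℝ) :
      (Real.exp (-(v / 2) * t ^ 2) : ℂ) * Complex.exp (((μ - x) * t : ℝ) * I) =
        Complex.exp (I * (μ - x : ℝ) * t) * Complex.exp (-((v / 2 : ℝ) : ℂ) * t ^ 2) := by
    push_cast
    rw [mul_comm]
    ring_nf
  have hconst : (π / ((v / 2 : ℝ) : ℂ)) ^ (1 / 2 : ℂ) = (2 * π * (√(2 * π * v))⁻¹ : ℝ) := by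
    rw [← Complex.ofReal_div, show (1 / 2 : ℂ) = ((1 / 2 : ℝ) : ℂ) by simp,
      ← Complex.ofReal_cpow (by positivity), ← Real.sqrt_eq_rpow]
    congr 1
    rw [Real.sqrt_eq_iff_mul_self_eq (by positivity) (by positivity), ← sq, mul_pow, inv_pow,
      Real.sq_sqrt (by positivity)]
    field_simp
  simp_rw [hreorder]
  rw [hfourier, hconst, gaussianPDFReal]
  push_cast
  rw [mul_assoc]
  congr 3
  field_simp
  ring

/-- The characteristic function of `X - p`, where `X` is a Bernoulli variable with parameter `p`. -/
noncomputable def centeredBernoulliCharFun (p t : ℝ) : ℂ :=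
  (1 - p) * Complex.exp ((-(p * t) : ℝ) * I) + p * Complex.exp (((1 - p) * t : ℝ) * I)

@[fun_prop]
theorem continuous_centeredBernoulliCharFun (p : ℝ) : Continuous (centeredBernoulliCharFun p) := by
  unfold centeredBernoulliCharFun
  fun_prop

theorem centeredBernoulliCharFun_eq_exp_mul (p t : ℝ) :
    centeredBernoulliCharFun p t =
      Complex.exp ((-(p * t) : ℝ) * I) * (p * Complex.exp (t * I) + (1 - p)) := by
  rw [centeredBernoulliCharFun, mul_add, mul_left_comm, ← Complex.exp_add, add_comm]
  push_cast
  ring_nf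

theorem norm_sq_centeredBernoulliCharFun (p t : ℝ) :
    ‖centeredBernoulliCharFun p t‖ ^ 2 = 1 - 2 * (p * (1 - p)) * (1 - Real.cos t) := by
  rw [centeredBernoulliCharFun_eq_exp_mul, norm_mul, Complex.norm_exp_ofReal_mul_I, one_mul,
    Complex.exp_mul_I, ← Complex.ofReal_cos, ← Complex.ofReal_sin,
    show (p * (Real.cos t + Real.sin t * I) + (1 - p) : ℂ) =
      (p * Real.cos t + (1 - p) : ℝ) + (p * Real.sin t : ℝ) * I by push_cast; ring,
    ← Complex.normSq_eq_norm_sq, Complex.normSq_add_mul_I]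
  linear_combination p ^ 2 * Real.sin_sq_add_cos_sq t

section CharFun

variable {p t : ℝ} (h0 : 0 ≤ p) (h1 : p ≤ 1)
include h0 h1

theorem norm_centeredBernoulliCharFun_le (ht : |t| ≤ π) :
    ‖centeredBernoulliCharFun p t‖ ≤ Real.exp (-(2 / π ^ 2 * (p * (1 - p))) * t ^ 2) := by
  refine (sq_le_sq₀ (norm_nonneg _) (Real.exp_nonneg _)).1 ?_
  rw [norm_sq_centeredBernoulliCharFun, ← Real.exp_nat_mul]
  calc 1 - 2 * (p * (1 - p)) * (1 - Real.cos t)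
      ≤ 1 - 2 * (p * (1 - p)) * (1 - (1 - 2 / π ^ 2 * t ^ 2)) := by
        gcongr
        exact Real.cos_le_one_sub_mul_cos_sq ht
    _ = ((2 : ℕ) : ℝ) * (-(2 / π ^ 2 * (p * (1 - p))) * t ^ 2) + 1 := by push_cast; ring
    _ ≤ _ := Real.add_one_le_exp _

theorem norm_centeredBernoulliCharFun_sub_taylor_le (t : ℝ) :
    ‖centeredBernoulliCharFun p t - (1 - p * (1 - p) * t ^ 2 / 2 : ℝ)‖ ≤
      p * (1 - p) * (1 - 2 * (p * (1 - p))) / 6 * |t| ^ 3 := by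
  have hq : 0 ≤ 1 - p := sub_nonneg.2 h1
  let remainder (z : ℂ) : ℂ := Complex.exp z - ∑ j ∈ Finset.range 3, z ^ j / (j ! : ℂ)
  have hremainder (x : ℝ) : ‖remainder (x * I)‖ ≤ |x| ^ 3 / 6 := by
    simpa [Nat.factorial] using norm_exp_sub_sum_range_le_of_re_nonpos (z := x * I) (by simp) 3
  have hcombine : centeredBernoulliCharFun p t - (1 - p * (1 - p) * t ^ 2 / 2 : ℝ) =
      (1 - p : ℝ) * remainder ((-(p * t) : ℝ) * I) + p * remainder (((1 - p) * t : ℝ) * I) := by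
    simp only [remainder, centeredBernoulliCharFun, Finset.sum_range_succ, Finset.sum_range_zero,
      mul_pow, Complex.I_sq]
    norm_num [Nat.factorial]
    ring
  rw [hcombine]
  calc _ ≤ (1 - p) * (|-(p * t)| ^ 3 / 6) + p * (|(1 - p) * t| ^ 3 / 6) := by
        refine norm_add_le_of_le ?_ ?_ <;>
          rw [norm_mul, Complex.norm_of_nonneg (by assumption)] <;>
          exact mul_le_mul_of_nonneg_left (hremainder _) (by assumption)
    _ = _ := by
        rw [abs_neg, abs_mul, abs_mul, abs_of_nonneg h0, abs_of_nonneg hq]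
        ring

theorem norm_centeredBernoulliCharFun_sub_exp_le (ht : |t| ≤ π) :
    ‖centeredBernoulliCharFun p t - (Real.exp (-(p * (1 - p) / 2) * t ^ 2) : ℝ)‖ ≤
      p * (1 - p) * (1 / 6 + (π / 8 - 1 / 3) * (p * (1 - p))) * |t| ^ 3 := by
  have hu : 0 ≤ p * (1 - p) := mul_nonneg h0 (sub_nonneg.2 h1)
  have hexp : ‖((1 - p * (1 - p) * t ^ 2 / 2 : ℝ) : ℂ) -
      (Real.exp (-(p * (1 - p) / 2) * t ^ 2) : ℝ)‖ ≤ (p * (1 - p) / 2 * t ^ 2) ^ 2 / 2 := by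
    have hre : ((-(p * (1 - p) / 2) * t ^ 2 : ℝ) : ℂ).re ≤ 0 := by
      rw [Complex.ofReal_re]
      nlinarith [mul_nonneg hu (sq_nonneg t)]
    rw [norm_sub_rev, Complex.ofReal_exp]
    convert norm_exp_sub_sum_range_le_of_re_nonpos hre 2 using 1
    · rw [Finset.sum_range_succ, Finset.sum_range_one]
      norm_num [Nat.factorial]
      ring_nf
    · rw [Complex.norm_real, Real.norm_eq_abs, sq_abs, Nat.factorial_two]
      push_cast
      ring
  calc _ ≤ p * (1 - p) * (1 - 2 * (p * (1 - p))) / 6 * |t| ^ 3 +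
          (p * (1 - p) / 2 * t ^ 2) ^ 2 / 2 :=
        norm_sub_le_norm_sub_add_norm_sub .. |>.trans
          (add_le_add (norm_centeredBernoulliCharFun_sub_taylor_le h0 h1 t) hexp)
    _ = p * (1 - p) * (1 - 2 * (p * (1 - p))) / 6 * |t| ^ 3 +
          (p * (1 - p)) ^ 2 / 8 * |t| ^ 3 * |t| := by rw [← sq_abs t]; ring
    _ ≤ p * (1 - p) * (1 - 2 * (p * (1 - p))) / 6 * |t| ^ 3 +
          (p * (1 - p)) ^ 2 / 8 * |t| ^ 3 * π := by gcongr
    _ = _ := by ring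

end CharFun

theorem norm_exp_mul_I_sub_exp_le {p u t : ℝ} (hp : 0 ≤ p) (hu : 0 ≤ u) (ht : |t| ≤ π) :
    ‖Complex.exp ((-(p * t) : ℝ) * I) - (Real.exp (-(u / 2) * t ^ 2) : ℝ)‖ ≤
      (p + π / 2 * u) * |t| := by
  have hexp {z : ℂ} (hz : z.re ≤ 0) : ‖Complex.exp z - 1‖ ≤ ‖z‖ := by
    simpa using norm_exp_sub_sum_range_le_of_re_nonpos hz 1
  calc _ ≤ ‖Complex.exp ((-(p * t) : ℝ) * I) - 1‖ +
          ‖1 - ((Real.exp (-(u / 2) * t ^ 2) : ℝ) : ℂ)‖ := norm_sub_le_norm_sub_add_norm_sub ..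
    _ ≤ ‖((-(p * t) : ℝ) * I : ℂ)‖ + ‖((-(u / 2) * t ^ 2 : ℝ) : ℂ)‖ := by
        rw [norm_sub_rev 1, Complex.ofReal_exp]
        exact add_le_add (hexp (by simp)) (hexp (by
          rw [Complex.ofReal_re]
          nlinarith [mul_nonneg hu (sq_nonneg t)]))
    _ = p * |t| + u / 2 * |t| * |t| := by
        rw [norm_mul, Complex.norm_I, Complex.norm_real, Complex.norm_real, Real.norm_eq_abs,
          Real.norm_eq_abs, abs_neg, abs_mul, abs_mul, abs_neg, abs_of_nonneg hp,
          abs_of_nonneg (div_nonneg hu zero_le_two), abs_sq, ← sq_abs t]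
        ring
    _ ≤ p * |t| + u / 2 * |t| * π := by gcongr
    _ = _ := by ring

theorem intervalIntegral_exp_int_mul_I (a : ℤ) :
    ∫ t in -π..π, Complex.exp (a * t * I) = if a = 0 then 2 * (π : ℂ) else 0 := by
  split_ifs with h
  · simp [h, two_mul]
  · have hc : (a : ℂ) * I ≠ 0 := mul_ne_zero (by exact_mod_cast h) Complex.I_ne_zero
    simp_rw [mul_right_comm]
    rw [integral_exp_mul_complex hc, div_eq_zero_iff, sub_eq_zero,
      Complex.exp_eq_exp_iff_exists_int]
    exact .inl ⟨a, by push_cast; ring⟩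

theorem derivative_sum_range_bernsteinPolynomial (R : Type*) [CommRing R] (n k : ℕ) :
    Polynomial.derivative (∑ i ∈ Finset.range (k + 1), bernsteinPolynomial R n i) =
      -n * bernsteinPolynomial R (n - 1) k := by
  induction k with
  | zero => simp [bernsteinPolynomial.derivative_zero]
  | succ k ih =>
    rw [Finset.sum_range_succ, Polynomial.derivative_add, ih, bernsteinPolynomial.derivative_succ]
    ring

/-- The probability that a binomial variable with parameters `m` and `p` takes the value `k`. -/
noncomputable def binomialMass (m k : ℕ) (p : ℝ) : ℝ :=
  m.choose k * p ^ k * (1 - p) ^ (m - k)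

theorem eval_bernsteinPolynomial_eq_binomialMass (m k : ℕ) (p : ℝ) :
    (bernsteinPolynomial ℝ m k).eval p = binomialMass m k p := by
  simp [bernsteinPolynomial, binomialMass]

theorem hasDerivAt_sum_range_binomialMass (m k : ℕ) (p : ℝ) :
    HasDerivAt (fun s => ∑ i ∈ Finset.range (k + 1), binomialMass (m + 1) i s)
      (-((m + 1) * binomialMass m k p)) p := by
  have h := (∑ i ∈ Finset.range (k + 1), bernsteinPolynomial ℝ (m + 1) i).hasDerivAt p
  rw [derivative_sum_range_bernsteinPolynomial] at h
  simpa [Polynomial.eval_finsetSum, eval_bernsteinPolynomial_eq_binomialMass, add_mul] using h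

theorem binomialMass_nonneg {p : ℝ} (h0 : 0 ≤ p) (h1 : p ≤ 1) (m k : ℕ) :
    0 ≤ binomialMass m k p := by
  unfold binomialMass
  positivity

theorem binomialMass_le_one {p : ℝ} (h0 : 0 ≤ p) (h1 : p ≤ 1) (m k : ℕ) :
    binomialMass m k p ≤ 1 := by
  rcases le_or_gt k m with hk | hk
  · have hsum : ∑ j ∈ Finset.range (m + 1), binomialMass m j p = 1 := by
      simpa [Polynomial.eval_finsetSum, eval_bernsteinPolynomial_eq_binomialMass] using
        congr_arg (Polynomial.eval p) (bernsteinPolynomial.sum ℝ m)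
    exact (Finset.single_le_sum (fun j _ => binomialMass_nonneg h0 h1 m j)
      (Finset.mem_range_succ_iff.2 hk)).trans_eq hsum
  · simp [binomialMass, Nat.choose_eq_zero_of_lt hk]

theorem centeredBernoulliCharFun_pow_mul_exp (p t : ℝ) (m k : ℕ) :
    centeredBernoulliCharFun p t ^ m * Complex.exp (((m * p - k) * t : ℝ) * I) =
      ∑ j ∈ Finset.range (m + 1), binomialMass m j p * Complex.exp ((j - k : ℤ) * t * I) := by
  rw [centeredBernoulliCharFun_eq_exp_mul, mul_pow, ← Complex.exp_nat_mul, add_pow,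
    Finset.mul_sum, Finset.sum_mul]
  refine Finset.sum_congr rfl fun j _ => ?_
  have hexp : Complex.exp ((j - k : ℤ) * t * I) =
      Complex.exp (m * ((-(p * t) : ℝ) * I)) * Complex.exp (j * (t * I)) *
        Complex.exp (((m * p - k) * t : ℝ) * I) := by
    rw [← Complex.exp_add, ← Complex.exp_add]
    push_cast
    ring_nf
  rw [hexp, mul_pow, ← Complex.exp_nat_mul, binomialMass]
  push_cast
  ring

theorem intervalIntegral_centeredBernoulliCharFun_pow (p : ℝ) (m k : ℕ) :
    ∫ t in -π..π, centeredBernoulliCharFun p t ^ m * Complex.exp (((m * p - k) * t : ℝ) * I) =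
      ((2 * π * binomialMass m k p : ℝ) : ℂ) := by
  simp_rw [centeredBernoulliCharFun_pow_mul_exp]
  rw [intervalIntegral.integral_finsetSum
    fun j _ => Continuous.intervalIntegrable (by fun_prop) _ _]
  simp_rw [intervalIntegral.integral_const_mul, intervalIntegral_exp_int_mul_I, sub_eq_zero,
    Nat.cast_inj, mul_ite, mul_zero]
  simp only [Finset.sum_ite_eq', Finset.mem_range_succ_iff]
  split_ifs with hk
  · push_cast
    ring
  · simp [binomialMass, Nat.choose_eq_zero_of_lt (not_le.1 hk)]

theorem mul_binomialMass_sq_le {p : ℝ} (h0 : 0 ≤ p) (h1 : p ≤ 1) (m k : ℕ) :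
    m * (p * (1 - p)) * binomialMass m k p ^ 2 ≤ π / 8 := by
  set v := m * (p * (1 - p)) with hv
  rcases (show 0 ≤ v by positivity).eq_or_lt with hv0 | hv0
  · rw [← hv0, zero_mul]
    positivity
  have hc : 0 < 2 / π ^ 2 * v := by positivity
  have hbound : 2 * π * binomialMass m k p ≤ √(π / (2 / π ^ 2 * v)) := by
    calc 2 * π * binomialMass m k p
        = ‖∫ t in -π..π, centeredBernoulliCharFun p t ^ m *
            Complex.exp (((m * p - k) * t : ℝ) * I)‖ := by
          rw [intervalIntegral_centeredBernoulliCharFun_pow, Complex.norm_of_nonneg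
            (mul_nonneg Real.two_pi_pos.le (binomialMass_nonneg h0 h1 m k))]
      _ ≤ ∫ t in -π..π, Real.exp (-(2 / π ^ 2 * v) * t ^ 2) := by
          refine intervalIntegral.norm_integral_le_of_norm_le (by linarith [Real.pi_pos])
            (.of_forall fun t ht => ?_) (Continuous.intervalIntegrable (by fun_prop) _ _)
          rw [norm_mul, Complex.norm_exp_ofReal_mul_I, mul_one, norm_pow]
          refine (pow_le_pow_left₀ (norm_nonneg _)
            (norm_centeredBernoulliCharFun_le h0 h1 (abs_le.2 ⟨ht.1.le, ht.2⟩)) m).trans_eq ?_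
          rw [← Real.exp_nat_mul, hv]
          ring_nf
      _ ≤ ∫ t, Real.exp (-(2 / π ^ 2 * v) * t ^ 2) :=
          intervalIntegral_le_integral_of_nonneg (integrable_exp_neg_mul_sq hc)
            (fun t => Real.exp_nonneg _) (by linarith [Real.pi_pos])
      _ = √(π / (2 / π ^ 2 * v)) := integral_gaussian _
  have hsq := pow_le_pow_left₀
    (mul_nonneg Real.two_pi_pos.le (binomialMass_nonneg h0 h1 m k)) hbound 2
  rw [Real.sq_sqrt (by positivity), mul_pow, mul_pow, ← le_div_iff₀' (by positivity)] at hsq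
  calc v * binomialMass m k p ^ 2 ≤ v * _ := mul_le_mul_of_nonneg_left hsq hv0.le
    _ = π / 8 := by field_simp; norm_num

theorem intervalIntegral_sum_cube_add_abs_mul_exp_neg_mul_sq_le {ι : Type*} (S : Finset ι)
    {r : ι → ℝ} {s C D a : ℝ} (hr : ∀ j, 0 < r j) (hs : 0 < s) (hC : 0 ≤ C) (hD : 0 ≤ D)
    (ha : 0 ≤ a) :
    ∫ t in -a..a, (C * ∑ j ∈ S, |t| ^ 3 * Real.exp (-r j * t ^ 2) +
        D * (|t| * Real.exp (-s * t ^ 2))) ≤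
      C * ∑ j ∈ S, 1 / r j ^ 2 + D * (1 / s) := by
  have hcube (j : ι) := integrable_abs_pow_mul_exp_neg_mul_sq (hr j) 3
  have hsum := (integrable_finsetSum S fun j _ => hcube j).const_mul C
  have habs : Integrable fun t : ℝ => D * (|t| * Real.exp (-s * t ^ 2)) := by
    simpa using (integrable_abs_pow_mul_exp_neg_mul_sq hs 1).const_mul D
  refine (intervalIntegral_le_integral_of_nonneg (hsum.add habs) (fun t => ?_)
    (by linarith)).trans_eq ?_
  · simp only [Pi.zero_apply, Pi.add_apply]
    positivity
  · have hcube_integral (j : ι) : ∫ t : ℝ, |t| ^ 3 * Real.exp (-r j * t ^ 2) = 1 / r j ^ 2 := by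
      simpa using integral_abs_pow_odd_mul_exp_neg_mul_sq (hr j) 1
    have habs_integral : ∫ t : ℝ, |t| * Real.exp (-s * t ^ 2) = 1 / s := by
      simpa using integral_abs_pow_odd_mul_exp_neg_mul_sq hs 0
    rw [integral_add' hsum habs, integral_const_mul, integral_const_mul,
      integral_finsetSum _ fun j _ => hcube j, habs_integral]
    simp_rw [hcube_integral]

section LocalLimit

variable {p : ℝ}

theorem norm_centeredBernoulliCharFun_pow_sub_exp_le (h0 : 0 ≤ p) (h1 : p ≤ 1) (m : ℕ) {t : ℝ}
    (ht : |t| ≤ π) :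
    ‖centeredBernoulliCharFun p t ^ m - (Real.exp (-(m * (p * (1 - p)) / 2) * t ^ 2) : ℝ)‖ ≤
      p * (1 - p) * (1 / 6 + (π / 8 - 1 / 3) * (p * (1 - p))) * ∑ j ∈ Finset.range m, |t| ^ 3 *
        Real.exp (-(p * (1 - p) * (2 / π ^ 2 * (m - 1) + (1 / 2 - 2 / π ^ 2) * j)) * t ^ 2) := by
  set g := Real.exp (-(p * (1 - p) / 2) * t ^ 2) with hg
  have hpow : Real.exp (-(m * (p * (1 - p)) / 2) * t ^ 2) = g ^ m := by
    rw [hg, ← Real.exp_nat_mul]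
    ring_nf
  have hgnorm : ‖(g : ℂ)‖ ≤ g := (Complex.norm_of_nonneg (Real.exp_nonneg _)).le
  rw [hpow, Complex.ofReal_pow, norm_sub_rev]
  refine (norm_pow_sub_pow_le_mul_sum hgnorm
    (norm_centeredBernoulliCharFun_le h0 h1 ht) m).trans ?_
  rw [norm_sub_rev, ← Finset.mul_sum, ← mul_assoc (p * (1 - p) * _)]
  refine mul_le_mul_of_nonneg (norm_centeredBernoulliCharFun_sub_exp_le h0 h1 ht)
    (Finset.sum_le_sum fun j hj => le_of_eq ?_) (norm_nonneg _) (by positivity)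
  rw [hg, ← Real.exp_nat_mul, ← Real.exp_nat_mul, ← Real.exp_add, Nat.sub_sub,
    Nat.cast_sub (by have := Finset.mem_range.1 hj; omega)]
  push_cast
  ring_nf

theorem norm_centeredBernoulliCharFun_pow_mul_exp_sub_exp_le (h0 : 0 ≤ p) (h1 : p ≤ 1) (m : ℕ)
    {t : ℝ} (ht : |t| ≤ π) :
    ‖centeredBernoulliCharFun p t ^ m * Complex.exp ((-(p * t) : ℝ) * I) -
        (Real.exp (-((m + 1) * (p * (1 - p)) / 2) * t ^ 2) : ℝ)‖ ≤
      p * (1 - p) * (1 / 6 + (π / 8 - 1 / 3) * (p * (1 - p))) * ∑ j ∈ Finset.range m, |t| ^ 3 *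
        Real.exp (-(p * (1 - p) * (2 / π ^ 2 * (m - 1) + (1 / 2 - 2 / π ^ 2) * j)) * t ^ 2) +
      (p + π / 2 * (p * (1 - p))) * (|t| * Real.exp (-(m * (p * (1 - p)) / 2) * t ^ 2)) := by
  set G := Real.exp (-(m * (p * (1 - p)) / 2) * t ^ 2) with hG
  set g := Real.exp (-(p * (1 - p) / 2) * t ^ 2) with hg
  have hsucc : Real.exp (-((m + 1) * (p * (1 - p)) / 2) * t ^ 2) = G * g := by
    rw [hG, hg, ← Real.exp_add]
    ring_nf
  have hsplit : centeredBernoulliCharFun p t ^ m * Complex.exp ((-(p * t) : ℝ) * I) -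
      ((G * g : ℝ) : ℂ) = (centeredBernoulliCharFun p t ^ m - G) *
        Complex.exp ((-(p * t) : ℝ) * I) + G * (Complex.exp ((-(p * t) : ℝ) * I) - g) := by
    push_cast
    ring
  rw [hsucc, hsplit]
  refine norm_add_le_of_le ?_ ?_
  · rw [norm_mul, Complex.norm_exp_ofReal_mul_I, mul_one]
    exact norm_centeredBernoulliCharFun_pow_sub_exp_le h0 h1 m ht
  · rw [norm_mul, Complex.norm_of_nonneg (Real.exp_nonneg _), mul_comm]
    exact (mul_le_mul_of_nonneg_right (norm_exp_mul_I_sub_exp_le h0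
      (mul_nonneg h0 (sub_nonneg.2 h1)) ht) (Real.exp_nonneg _)).trans_eq (mul_assoc ..)

theorem norm_intervalIntegral_centeredBernoulliCharFun_pow_sub_exp_le (h0 : 0 < p) (h1 : p < 1)
    {m : ℕ} (hm : 2 ≤ m) (x : ℝ) :
    ‖(∫ t in -π..π, centeredBernoulliCharFun p t ^ m * Complex.exp (((m * p - x) * t : ℝ) * I)) -
        ∫ t in -π..π, (Real.exp (-((m + 1) * (p * (1 - p)) / 2) * t ^ 2) : ℂ) *
          Complex.exp ((((m + 1) * p - x) * t : ℝ) * I)‖ ≤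
      p * (1 - p) * (1 / 6 + (π / 8 - 1 / 3) * (p * (1 - p))) * ∑ j ∈ Finset.range m,
        1 / (p * (1 - p) * (2 / π ^ 2 * (m - 1) + (1 / 2 - 2 / π ^ 2) * j)) ^ 2 +
      (p + π / 2 * (p * (1 - p))) * (1 / (m * (p * (1 - p)) / 2)) := by
  have hm' : (2 : ℝ) ≤ m := by exact_mod_cast hm
  have hκ : 0 ≤ π / 8 - 1 / 3 := by linarith [Real.pi_gt_three]
  have hstep : 0 ≤ 1 / 2 - 2 / π ^ 2 := by
    rw [sub_nonneg, div_le_div_iff₀ (by positivity) two_pos]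
    nlinarith [Real.pi_gt_three]
  have hrate (j : ℕ) :
      0 < p * (1 - p) * (2 / π ^ 2 * (m - 1) + (1 / 2 - 2 / π ^ 2) * j) := by
    have : (0 : ℝ) < m - 1 := by linarith
    positivity
  rw [← intervalIntegral.integral_sub (Continuous.intervalIntegrable (by fun_prop) _ _)
    (Continuous.intervalIntegrable (by fun_prop) _ _)]
  refine (intervalIntegral.norm_integral_le_of_norm_le (by linarith [Real.pi_pos])
    (.of_forall fun t ht => ?_) (Continuous.intervalIntegrable (by fun_prop) _ _)).trans
    (intervalIntegral_sum_cube_add_abs_mul_exp_neg_mul_sq_le _ hrate (by positivity)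
      (by positivity) (by positivity) Real.pi_pos.le)
  refine le_trans (le_of_eq ?_) (norm_centeredBernoulliCharFun_pow_mul_exp_sub_exp_le h0.le h1.le m
    (abs_le.2 ⟨ht.1.le, ht.2⟩))
  have hshift : Complex.exp (((m * p - x) * t : ℝ) * I) =
      Complex.exp ((-(p * t) : ℝ) * I) * Complex.exp ((((m + 1) * p - x) * t : ℝ) * I) := by
    rw [← Complex.exp_add]
    push_cast
    ring_nf
  rw [hshift, ← mul_assoc, ← sub_mul, norm_mul, Complex.norm_exp_ofReal_mul_I, mul_one]

theorem abs_binomialMass_sub_gaussianPDFReal_le (h0 : 0 < p) (h1 : p < 1) {m : ℕ} (hm : 2 ≤ m)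
    (k : ℕ) {v : ℝ≥0} (hv : (v : ℝ) = (m + 1) * (p * (1 - p))) :
    2 * π * |binomialMass m k p - gaussianPDFReal ((m + 1) * p) v k| ≤
      p * (1 - p) * (1 / 6 + (π / 8 - 1 / 3) * (p * (1 - p))) * ∑ j ∈ Finset.range m,
        1 / (p * (1 - p) * (2 / π ^ 2 * (m - 1) + (1 / 2 - 2 / π ^ 2) * j)) ^ 2 +
      (p + π / 2 * (p * (1 - p))) * (1 / (m * (p * (1 - p)) / 2)) +
      Real.exp (-(v / 2) * π ^ 2) / (v / 2 * π) := by
  have hv0 : (0 : ℝ) < v := by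
    rw [hv]
    exact mul_pos (by positivity) (mul_pos h0 (sub_pos.2 h1))
  have hmain := norm_intervalIntegral_centeredBernoulliCharFun_pow_sub_exp_le h0 h1 hm k
  have htail := norm_integral_sub_intervalIntegral_le (c := v / 2) (a := π)
    (g := fun t : ℝ => (Real.exp (-(v / 2) * t ^ 2) : ℂ) *
      Complex.exp ((((m + 1) * p - k) * t : ℝ) * I)) (by positivity) Real.pi_pos (by fun_prop)
    (fun t => by rw [norm_mul, Complex.norm_exp_ofReal_mul_I, mul_one,
      Complex.norm_of_nonneg (Real.exp_nonneg _)])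
  rw [integral_exp_mul_exp_mul_I_eq_gaussianPDFReal (NNReal.coe_pos.1 hv0).ne', norm_sub_rev]
    at htail
  rw [intervalIntegral_centeredBernoulliCharFun_pow, ← hv] at hmain
  calc _ = ‖((2 * π * binomialMass m k p : ℝ) : ℂ) -
        ((2 * π * gaussianPDFReal ((m + 1) * p) v k : ℝ) : ℂ)‖ := by
        rw [← Complex.ofReal_sub, ← mul_sub, Complex.norm_real, norm_mul, Real.norm_eq_abs,
          Real.norm_eq_abs, abs_of_pos Real.two_pi_pos]
    _ ≤ _ := norm_sub_le_norm_sub_add_norm_sub _ _ _ |>.trans (add_le_add hmain htail)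

end LocalLimit

theorem hasDerivAt_integral_Iio {E : Type*} [NormedAddCommGroup E] [NormedSpace ℝ E]
    [CompleteSpace E] {f : ℝ → E} (hint : Integrable f) (hf : Continuous f) (x : ℝ) :
    HasDerivAt (fun x => ∫ t in Set.Iio x, f t) (f x) x := by
  have hsplit (y : ℝ) :
      ∫ t in Set.Iio y, f t = (∫ t in Set.Iic 0, f t) + ∫ t in (0 : ℝ)..y, f t := by
    rw [← integral_Iic_eq_integral_Iio,
      ← intervalIntegral.integral_Iic_sub_Iic hint.integrableOn hint.integrableOn]
    abel
  simp_rw [hsplit]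
  exact (intervalIntegral.integral_hasDerivAt_right (hf.intervalIntegrable _ _)
    (hf.stronglyMeasurableAtFilter _ _) hf.continuousAt).const_add _

theorem gaussianPDFReal_zero_one (x : ℝ) :
    gaussianPDFReal 0 1 x = (√(2 * π))⁻¹ * Real.exp (-x ^ 2 / 2) := by
  simp [gaussianPDFReal]

theorem Phi_eq_integral_gaussianPDFReal (x : ℝ) :
    Phi x = ∫ t in Set.Iio x, gaussianPDFReal 0 1 t := by
  simp_rw [gaussianPDFReal_zero_one, integral_const_mul, Phi]

theorem hasDerivAt_Phi (x : ℝ) : HasDerivAt Phi (gaussianPDFReal 0 1 x) x := by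
  rw [funext Phi_eq_integral_gaussianPDFReal]
  refine hasDerivAt_integral_Iio (integrable_gaussianPDFReal 0 1) ?_ x
  simp_rw [gaussianPDFReal_def]
  fun_prop

theorem mul_gaussianPDFReal_eq_sqrt_mul {v : ℝ≥0} (hv : v ≠ 0) (μ x : ℝ) :
    v * gaussianPDFReal μ v x = √v * gaussianPDFReal 0 1 ((x - μ) / √v) := by
  have hv' : (0 : ℝ) < v := NNReal.coe_pos.2 (pos_iff_ne_zero.2 hv)
  have hexp : -((x - μ) / √v) ^ 2 / 2 = -(x - μ) ^ 2 / (2 * v) := by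
    rw [div_pow, Real.sq_sqrt hv'.le]
    field_simp
  rw [gaussianPDFReal_zero_one, gaussianPDFReal, hexp, Real.sqrt_mul (by positivity) (v : ℝ)]
  nth_rw 1 [← Real.mul_self_sqrt hv'.le]
  field_simp

theorem gaussianPDFReal_zero_one_le (z : ℝ) : gaussianPDFReal 0 1 z ≤ 0.4 := by
  have hsqrt : (2.5 : ℝ) ≤ √(2 * π) := Real.le_sqrt_of_sq_le (by linarith [Real.pi_gt_d4])
  have hexp : Real.exp (-z ^ 2 / 2) ≤ 1 := Real.exp_le_one_iff.2 (by nlinarith [sq_nonneg z])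
  calc gaussianPDFReal 0 1 z = (√(2 * π))⁻¹ * Real.exp (-z ^ 2 / 2) := gaussianPDFReal_zero_one z
    _ ≤ (2.5 : ℝ)⁻¹ * 1 := by gcongr
    _ = 0.4 := by norm_num

-- Squaring reduces the bound to `z ^ 2 ≤ exp (z ^ 2 - 1)`, with equality at `z ^ 2 = 1`.
theorem gaussianPDFReal_zero_one_mul_abs_le (z : ℝ) : gaussianPDFReal 0 1 z * |z| ≤ 0.242 := by
  have hsq : z ^ 2 ≤ Real.exp (z ^ 2 - 1) := by linarith [Real.add_one_le_exp (z ^ 2 - 1)]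
  have hexp : Real.exp (-z ^ 2 / 2) ^ 2 * Real.exp (z ^ 2 - 1) = Real.exp (-1) := by
    rw [← Real.exp_nat_mul, ← Real.exp_add]
    push_cast
    ring_nf
  refine abs_le_of_sq_le_sq (a := _ * |z|) ?_ (by norm_num) |> (le_abs_self _).trans
  calc (gaussianPDFReal 0 1 z * |z|) ^ 2
      = 1 / (2 * π) * (Real.exp (-z ^ 2 / 2) ^ 2 * z ^ 2) := by
        rw [gaussianPDFReal_zero_one, mul_pow, mul_pow, sq_abs, inv_pow,
          Real.sq_sqrt (by positivity), one_div, mul_assoc]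
    _ ≤ 1 / (2 * π) * (Real.exp (-z ^ 2 / 2) ^ 2 * Real.exp (z ^ 2 - 1)) := by gcongr
    _ = 1 / (2 * π) * Real.exp (-1) := by rw [hexp]
    _ ≤ 1 / (2 * 3.1415) * 0.3678794412 := by
        gcongr
        · exact Real.pi_gt_d4.le
        · exact Real.exp_neg_one_lt_d9.le
    _ ≤ 0.242 ^ 2 := by norm_num

theorem hasDerivAt_standardization {n x p : ℝ} (hn : 0 < n) (h0 : 0 < p) (h1 : p < 1) :
    HasDerivAt (fun s : ℝ => (x - n * s) / √(n * s * (1 - s)))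
      (-(1 / (p * (1 - p))) * (√(n * p * (1 - p)) +
        (x - n * p) / √(n * p * (1 - p)) * (1 - 2 * p) / 2)) p := by
  have hq : 0 < 1 - p := sub_pos.2 h1
  have hv : 0 < n * p * (1 - p) := by positivity
  have hvariance : HasDerivAt (fun s : ℝ => n * s * (1 - s)) (n * (1 - 2 * p)) p :=
    (((hasDerivAt_id' p).const_mul n).mul ((hasDerivAt_id' p).const_sub 1)).congr_deriv (by ring)
  have hnum : HasDerivAt (fun s : ℝ => x - n * s) (-n) p :=
    (((hasDerivAt_id' p).const_mul n).const_sub x).congr_deriv (by ring)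
  have hsqrt : 0 < √(n * p * (1 - p)) := Real.sqrt_pos.2 hv
  refine (hnum.div (hvariance.sqrt hv.ne') hsqrt.ne').congr_deriv ?_
  field_simp
  rw [Real.sq_sqrt hv.le]
  ring

theorem two_div_pi_sq_mem_Icc : 2 / π ^ 2 ∈ Set.Icc 0.2026 0.2027 := by
  have hlo := Real.pi_gt_d4
  have hhi := Real.pi_lt_d4
  constructor
  · rw [le_div_iff₀ (by positivity)]
    nlinarith
  · rw [div_le_iff₀ (by positivity)]
    nlinarith

theorem mul_sum_one_div_two_div_pi_sq_arith_sq_le {m : ℕ} (hm : 7 ≤ m) :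
    (m + 1) * ∑ j ∈ Finset.range m,
      1 / (2 / π ^ 2 * (m - 1) + (1 / 2 - 2 / π ^ 2) * j) ^ 2 ≤ (16.7 : ℝ) := by
  obtain ⟨hlo, hhi⟩ := two_div_pi_sq_mem_Icc
  have hm' : (7 : ℝ) ≤ m := by exact_mod_cast hm
  generalize 2 / π ^ 2 = a at hlo hhi ⊢
  have hfirst : 0.2026 * (m - 1 / 2) - 1 / 4 ≤ a * (m - 1) - (1 / 2 - a) / 2 := by nlinarith
  have hlast : m / 2 - 1 / 4 - 0.2027 / 2 ≤ a * (m - 1) + (m - 1 / 2) * (1 / 2 - a) := by linarith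
  have hfirst_pos : 0 < 0.2026 * ((m : ℝ) - 1 / 2) - 1 / 4 := by linarith
  have hlast_pos : 0 < (m : ℝ) / 2 - 1 / 4 - 0.2027 / 2 := by linarith
  calc _ ≤ (m + 1) * (m / ((a * (m - 1) - (1 / 2 - a) / 2) *
        (a * (m - 1) + (m - 1 / 2) * (1 / 2 - a)))) := by
        gcongr
        exact sum_one_div_arith_sq_le (by linarith) (by linarith) m
    _ ≤ (m + 1) * (m / ((0.2026 * (m - 1 / 2) - 1 / 4) * (m / 2 - 1 / 4 - 0.2027 / 2))) := by
        gcongr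
        exact hfirst_pos.le.trans hfirst
    _ ≤ 16.7 := by
        rw [← mul_div_assoc, div_le_iff₀ (by positivity)]
        nlinarith

theorem exp_neg_half_mul_pi_sq_div_pi_sq_le {v : ℝ} (hv : 0.637 ≤ v) :
    Real.exp (-(v / 2) * π ^ 2) / π ^ 2 ≤ 0.0051 := by
  have hpi := Real.pi_gt_d4
  have hexponent : -(v / 2) * π ^ 2 ≤ (3 : ℕ) * (-1) := by
    push_cast
    nlinarith
  calc Real.exp (-(v / 2) * π ^ 2) / π ^ 2 ≤ Real.exp ((3 : ℕ) * (-1)) / π ^ 2 := by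
        gcongr
    _ = Real.exp (-1) ^ 3 / π ^ 2 := by rw [Real.exp_nat_mul]
    _ ≤ 0.3678794412 ^ 3 / 3.1415 ^ 2 := by
        gcongr
        exact Real.exp_neg_one_lt_d9.le
    _ ≤ 0.0051 := by norm_num

theorem one_div_two_pi_le : 1 / (2 * π) ≤ 0.15916 := by
  rw [div_le_iff₀ Real.two_pi_pos]
  linarith [Real.pi_gt_d4]

theorem local_limit_error_le {p : ℝ} (h0 : 0 < p) (h1 : p < 1) :
    2.658 * (1 / 6 + 0.0594 * (p * (1 - p))) + 0.36381 * (p + 1.5708 * (p * (1 - p))) + 0.0051 ≤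
      0.516 / (1 - p) := by
  have hq : 0 < 1 - p := sub_pos.2 h1
  rw [le_div_iff₀ hq]
  nlinarith [mul_nonneg hq.le (sq_nonneg (p - 0.2)), mul_nonneg h0.le (sq_nonneg (p - 0.2)),
    mul_nonneg h0.le (sq_nonneg (p - 0.8)), sq_nonneg (p - 0.2), mul_pos h0 hq]

theorem mul_abs_binomialMass_sub_gaussianPDFReal_le {p : ℝ} (h0 : 0 < p) (h1 : p < 1) {m : ℕ}
    (hm : 7 ≤ m) (k : ℕ) {v : ℝ≥0} (hv : (v : ℝ) = (m + 1) * (p * (1 - p)))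
    (hv_lower : 0.637 ≤ (v : ℝ)) :
    v * |binomialMass m k p - gaussianPDFReal ((m + 1) * p) v k| ≤ 0.516 / (1 - p) := by
  have hm' : (7 : ℝ) ≤ m := by exact_mod_cast hm
  have hu : 0 < p * (1 - p) := mul_pos h0 (sub_pos.2 h1)
  have hlocal := abs_binomialMass_sub_gaussianPDFReal_le h0 h1 (by lia : 2 ≤ m) k hv
  have hsum := mul_sum_one_div_two_div_pi_sq_arith_sq_le hm
  set u := p * (1 - p)
  set S := ∑ j ∈ Finset.range m, 1 / (2 / π ^ 2 * (m - 1) + (1 / 2 - 2 / π ^ 2) * (j : ℝ)) ^ 2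
  simp_rw [mul_pow u, ← one_div_mul_one_div, ← Finset.mul_sum] at hlocal
  have hratio : ((m : ℝ) + 1) / m ≤ 8 / 7 := by
    rw [div_le_div_iff₀ (by linarith) (by norm_num)]
    linarith
  have hslope : π / 8 - 1 / 3 ≤ 0.0594 := by linarith [Real.pi_lt_d4]
  have hslope_pos : 0 ≤ π / 8 - 1 / 3 := by linarith [Real.pi_gt_d4]
  have hhalf : π / 2 ≤ 1.5708 := by linarith [Real.pi_lt_d4]
  calc _ = v / (2 * π) * (2 * π * |binomialMass m k p - gaussianPDFReal ((m + 1) * p) v k|) := by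
        field_simp
    _ ≤ v / (2 * π) * (u * (1 / 6 + (π / 8 - 1 / 3) * u) * (1 / u ^ 2 * S) +
        (p + π / 2 * u) * (1 / (m * u / 2)) + Real.exp (-(v / 2) * π ^ 2) / (v / 2 * π)) := by
        gcongr
    _ = 1 / (2 * π) * (((m + 1) * S) * (1 / 6 + (π / 8 - 1 / 3) * u)) +
        1 / (2 * π) * ((m + 1) / m) * (2 * (p + π / 2 * u)) +
        Real.exp (-(v / 2) * π ^ 2) / π ^ 2 := by
        generalize Real.exp (-(v / 2) * π ^ 2) = e
        rw [hv]
        field_simp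
    _ ≤ 0.15916 * (16.7 * (1 / 6 + 0.0594 * u)) + 0.15916 * (8 / 7) * (2 * (p + 1.5708 * u)) +
        0.0051 := by
        gcongr
        exacts [one_div_two_pi_le, one_div_two_pi_le, exp_neg_half_mul_pi_sq_div_pi_sq_le hv_lower]
    _ ≤ 2.658 * (1 / 6 + 0.0594 * u) + 0.36381 * (p + 1.5708 * u) + 0.0051 := by linarith
    _ ≤ 0.516 / (1 - p) := local_limit_error_le h0 h1

theorem variance_mul_binomialMass_le_of_le_six {p : ℝ} (h0 : 0 ≤ p) (h1 : p < 1) {m : ℕ}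
    (hm : 1 ≤ m) (hm6 : m ≤ 6) (k : ℕ) :
    (m + 1) * (p * (1 - p)) * binomialMass m k p ≤ 0.516 / (1 - p) + 0.121 := by
  have hq : 0 < 1 - p := sub_pos.2 h1
  have hm1 : (1 : ℝ) ≤ m := by exact_mod_cast hm
  have hm6' : (m : ℝ) ≤ 6 := by exact_mod_cast hm6
  have hmass := mul_binomialMass_sq_le h0 h1.le m k
  have hcount : ((m : ℝ) + 1) ^ 2 ≤ 49 / 6 * m := by nlinarith
  have hcubic : 3.208 * (p * (1 - p)) ≤ (0.516 / (1 - p) + 0.121) ^ 2 := by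
    rw [div_add' _ _ _ hq.ne', div_pow, le_div_iff₀ (by positivity)]
    nlinarith [sq_nonneg ((1 - p) ^ 2 - (1 - p) / 2 - 0.15), sq_nonneg p]
  refine le_of_sq_le_sq ?_ (by positivity)
  calc ((m + 1) * (p * (1 - p)) * binomialMass m k p) ^ 2
      = (m + 1) ^ 2 * ((p * (1 - p)) ^ 2 * binomialMass m k p ^ 2) := by ring
    _ ≤ 49 / 6 * m * ((p * (1 - p)) ^ 2 * binomialMass m k p ^ 2) := by gcongr
    _ = 49 / 6 * (p * (1 - p)) * (m * (p * (1 - p)) * binomialMass m k p ^ 2) := by ring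
    _ ≤ 49 / 6 * (p * (1 - p)) * (π / 8) := by gcongr
    _ ≤ 49 / 6 * (p * (1 - p)) * (3.1416 / 8) := by
        gcongr
        exact Real.pi_lt_d4.le
    _ ≤ 3.208 * (p * (1 - p)) := by nlinarith [mul_nonneg h0 hq.le]
    _ ≤ (0.516 / (1 - p) + 0.121) ^ 2 := hcubic

theorem variance_mul_binomialMass_le {p : ℝ} (h0 : 0 ≤ p) (h1 : p < 1) {m : ℕ}
    (hsmall : m ≤ 6 ∨ (m + 1) * (p * (1 - p)) ≤ 0.637) (k : ℕ) :
    (m + 1) * (p * (1 - p)) * binomialMass m k p ≤ 0.516 / (1 - p) + 0.121 := by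
  have hq : 0 < 1 - p := sub_pos.2 h1
  rcases le_or_gt ((m + 1) * (p * (1 - p))) 0.637 with hv | hv
  · have hone : 1 ≤ 1 / (1 - p) := one_le_one_div hq (by linarith)
    calc (m + 1) * (p * (1 - p)) * binomialMass m k p ≤ 0.637 * 1 := by
          gcongr
          · exact binomialMass_nonneg h0 h1.le m k
          · exact binomialMass_le_one h0 h1.le m k
      _ ≤ 0.516 * (1 / (1 - p)) + 0.121 := by linarith
      _ = 0.516 / (1 - p) + 0.121 := by rw [mul_one_div]
  · refine variance_mul_binomialMass_le_of_le_six h0 h1 ?_ (hsmall.resolve_right hv.not_ge) k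
    rw [Nat.one_le_iff_ne_zero]
    rintro rfl
    norm_num at hv
    nlinarith [sq_nonneg (p - 1 / 2)]

theorem mul_one_sub_pow_three_le (p : ℝ) : p * (1 - p) ^ 3 ≤ 27 / 256 := by
  nlinarith [mul_nonneg (sq_nonneg (1 - p - 3 / 4)) (add_nonneg (sq_nonneg (1 - p + 1 / 4))
    (by norm_num : (0 : ℝ) ≤ 1 / 8))]

theorem mul_sqrt_variance_le {p : ℝ} (h0 : 0 ≤ p) (h1 : p < 1) {m : ℕ}
    (hsmall : m ≤ 6 ∨ (m + 1) * (p * (1 - p)) ≤ 0.637) :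
    0.4 * √((m + 1) * (p * (1 - p))) ≤ 0.516 / (1 - p) := by
  have hq : 0 < 1 - p := sub_pos.2 h1
  suffices (m + 1) * (p * (1 - p)) * (1 - p) ^ 2 ≤ 1.29 ^ 2 by
    have hsqrt : √((m + 1) * (p * (1 - p))) * (1 - p) ≤ 1.29 := by
      rw [← Real.sqrt_sq hq.le, ← Real.sqrt_mul (by positivity)]
      simpa [Real.sqrt_sq hq.le] using Real.sqrt_le_iff.2 ⟨by norm_num, this⟩
    rw [le_div_iff₀ hq]
    linarith
  rcases hsmall with hm | hv
  · have hm' : (m : ℝ) ≤ 6 := by exact_mod_cast hm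
    calc (m + 1) * (p * (1 - p)) * (1 - p) ^ 2 = (m + 1) * (p * (1 - p) ^ 3) := by ring
      _ ≤ (6 + 1) * (27 / 256) := by
          gcongr
          exact mul_one_sub_pow_three_le p
      _ ≤ 1.29 ^ 2 := by norm_num
  · calc (m + 1) * (p * (1 - p)) * (1 - p) ^ 2 ≤ 0.637 * 1 ^ 2 := by
          gcongr
          linarith
      _ ≤ 1.29 ^ 2 := by norm_num

theorem sqrt_variance_add_div_sqrt_variance_nonneg {n x p : ℝ} (h0 : 0 ≤ p) (h1 : p ≤ 1)
    (hx : 0 ≤ x) (hxn : x ≤ n) :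
    0 ≤ √(n * (p * (1 - p))) + (x - n * p) / √(n * (p * (1 - p))) * (1 - 2 * p) / 2 := by
  calc 0 ≤ (x * (1 - p) + (n - x) * p) / 2 / √(n * (p * (1 - p))) := by positivity
    _ = n * (p * (1 - p)) / √(n * (p * (1 - p))) +
        (x - n * p) / √(n * (p * (1 - p))) * (1 - 2 * p) / 2 := by ring
    _ = _ := by rw [Real.div_sqrt]

theorem abs_gaussianPDFReal_zero_one_mul_le {p : ℝ} (h0 : 0 ≤ p) (h1 : p ≤ 1) (z : ℝ) :
    |gaussianPDFReal 0 1 z * (z * (1 - 2 * p) / 2)| ≤ 0.121 := by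
  have hskew : |1 - 2 * p| ≤ 1 := abs_le.2 ⟨by linarith, by linarith⟩
  calc |gaussianPDFReal 0 1 z * (z * (1 - 2 * p) / 2)|
      = gaussianPDFReal 0 1 z * |z| * |1 - 2 * p| / 2 := by
        rw [abs_mul, abs_of_nonneg (gaussianPDFReal_nonneg 0 1 z), abs_div, abs_mul, abs_two]
        ring
    _ ≤ 0.242 * 1 / 2 := by
        gcongr
        exact gaussianPDFReal_zero_one_mul_abs_le z
    _ = 0.121 := by norm_num

theorem abs_variance_mul_binomialMass_sub_le_of_small {p : ℝ} (h0 : 0 ≤ p) (h1 : p < 1) {m k : ℕ}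
    (hk : k ≤ m + 1) (hsmall : m ≤ 6 ∨ (m + 1) * (p * (1 - p)) ≤ 0.637) {σ z : ℝ}
    (hσ : σ = √((m + 1) * (p * (1 - p)))) (hz : z = (k - (m + 1) * p) / σ) :
    |(m + 1) * (p * (1 - p)) * binomialMass m k p -
      gaussianPDFReal 0 1 z * (σ + z * (1 - 2 * p) / 2)| ≤ 0.516 / (1 - p) + 0.121 := by
  have hdrift : 0 ≤ σ + z * (1 - 2 * p) / 2 := by
    rw [hz, hσ]
    exact sqrt_variance_add_div_sqrt_variance_nonneg h0 h1.le k.cast_nonneg (by exact_mod_cast hk)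
  have hmass := binomialMass_nonneg h0 h1.le m k
  refine abs_sub_le_of_nonneg_of_le (by positivity) (variance_mul_binomialMass_le h0 h1 hsmall k)
    (mul_nonneg (gaussianPDFReal_nonneg 0 1 z) hdrift) ?_
  calc gaussianPDFReal 0 1 z * (σ + z * (1 - 2 * p) / 2)
      = gaussianPDFReal 0 1 z * σ + gaussianPDFReal 0 1 z * (z * (1 - 2 * p) / 2) := mul_add _ _ _
    _ ≤ 0.4 * σ + 0.121 := by
        gcongr
        · exact hσ ▸ Real.sqrt_nonneg _
        · exact gaussianPDFReal_zero_one_le z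
        · exact (le_abs_self _).trans (abs_gaussianPDFReal_zero_one_mul_le h0 h1.le z)
    _ ≤ 0.516 / (1 - p) + 0.121 := by
        gcongr
        exact hσ ▸ mul_sqrt_variance_le h0 h1 hsmall

theorem abs_variance_mul_binomialMass_sub_le_of_large {p : ℝ} (h0 : 0 < p) (h1 : p < 1) {m : ℕ}
    (k : ℕ) (hm : 7 ≤ m) (hv : 0.637 ≤ (m + 1) * (p * (1 - p))) {σ z : ℝ}
    (hσ : σ = √((m + 1) * (p * (1 - p)))) (hz : z = (k - (m + 1) * p) / σ) :
    |(m + 1) * (p * (1 - p)) * binomialMass m k p -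
      gaussianPDFReal 0 1 z * (σ + z * (1 - 2 * p) / 2)| ≤ 0.516 / (1 - p) + 0.121 := by
  obtain ⟨v, hv'⟩ : ∃ v : ℝ≥0, (v : ℝ) = (m + 1) * (p * (1 - p)) :=
    ⟨⟨_, by linarith⟩, rfl⟩
  rw [← hv'] at hv hσ ⊢
  have hv0 : v ≠ 0 := by
    rintro rfl
    norm_num at hv
  have hdensity : v * gaussianPDFReal ((m + 1) * p) v k = σ * gaussianPDFReal 0 1 z := by
    rw [mul_gaussianPDFReal_eq_sqrt_mul hv0, ← hσ, ← hz]
  calc |v * binomialMass m k p - gaussianPDFReal 0 1 z * (σ + z * (1 - 2 * p) / 2)|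
      = |v * (binomialMass m k p - gaussianPDFReal ((m + 1) * p) v k) -
          gaussianPDFReal 0 1 z * (z * (1 - 2 * p) / 2)| := by
        rw [mul_sub (v : ℝ), hdensity, mul_comm σ, mul_add, sub_sub]
    _ ≤ |v * (binomialMass m k p - gaussianPDFReal ((m + 1) * p) v k)| +
          |gaussianPDFReal 0 1 z * (z * (1 - 2 * p) / 2)| := abs_sub _ _
    _ ≤ 0.516 / (1 - p) + 0.121 := by
        gcongr
        · rw [abs_mul, abs_of_nonneg v.coe_nonneg]
          exact mul_abs_binomialMass_sub_gaussianPDFReal_le h0 h1 hm k hv' hv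
        · exact abs_gaussianPDFReal_zero_one_mul_le h0.le h1.le z

theorem abs_variance_mul_binomialMass_sub_le {p : ℝ} (h0 : 0 < p) (h1 : p < 1) {m k : ℕ}
    (hk : k ≤ m + 1) {σ z : ℝ} (hσ : σ = √((m + 1) * (p * (1 - p))))
    (hz : z = (k - (m + 1) * p) / σ) :
    |(m + 1) * (p * (1 - p)) * binomialMass m k p -
      gaussianPDFReal 0 1 z * (σ + z * (1 - 2 * p) / 2)| ≤ 0.516 / (1 - p) + 0.121 := by
  by_cases hlarge : 7 ≤ m ∧ 0.637 ≤ (m + 1) * (p * (1 - p))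
  · exact abs_variance_mul_binomialMass_sub_le_of_large h0 h1 k hlarge.1 hlarge.2 hσ hz
  · refine abs_variance_mul_binomialMass_sub_le_of_small h0.le h1 hk ?_ hσ hz
    rw [not_and_or, not_le, not_le] at hlarge
    exact hlarge.imp Nat.lt_succ_iff.1 le_of_lt

/-- For `n ≥ 1`, `0 ≤ k ≤ n`, `0 < p < 1`, `q = 1 − p`:
`|∂/∂p F_{n,p}(k+1) − ∂/∂p G_{n,p}(k)| ≤ (1/(pq))(c₁/q + c₂)` with
`c₁ = 0.516`, `c₂ = 0.121`, where `F_{n,p}(k+1) = Σ_{i=0}^{k} C(n,i) p^i q^{n−i}`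
and `G_{n,p}(k) = Φ((k − np)/√(npq))` are viewed as functions of `p`. -/
theorem deriv_F_minus_deriv_G_bound_right (n k : ℕ) (hn : 1 ≤ n) (hk : k ≤ n)
    (p : ℝ) (hp : p ∈ Set.Ioo (0 : ℝ) 1) :
    |deriv (fun s : ℝ =>
        ∑ i ∈ Finset.range (k + 1), (n.choose i : ℝ) * s ^ i * (1 - s) ^ (n - i)) p -
      deriv (fun s : ℝ =>
        Phi (((k : ℝ) - n * s) / Real.sqrt (n * s * (1 - s)))) p| ≤
      (1 / (p * (1 - p))) * (0.516 / (1 - p) + 0.121) := by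
  obtain ⟨m, rfl⟩ : ∃ m, n = m + 1 := ⟨n - 1, by lia⟩
  obtain ⟨h0, h1⟩ := hp
  have hF := hasDerivAt_sum_range_binomialMass m k p
  have hG := (hasDerivAt_Phi _).comp p
    (hasDerivAt_standardization (n := ((m + 1 : ℕ) : ℝ)) (x := k) (by positivity) h0 h1)
  simp only [binomialMass, Function.comp_def] at hF hG
  rw [hF.deriv, hG.deriv, mul_assoc _ p, Nat.cast_succ]
  set σ := √((m + 1) * (p * (1 - p))) with hσ
  set z := (k - (m + 1) * p) / σ with hz
  calc _ = |-(1 / (p * (1 - p)) * ((m + 1) * (p * (1 - p)) * binomialMass m k p -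
        gaussianPDFReal 0 1 z * (σ + z * (1 - 2 * p) / 2)))| := by
        rw [binomialMass]
        field_simp
        ring_nf
    _ = 1 / (p * (1 - p)) * |(m + 1) * (p * (1 - p)) * binomialMass m k p -
        gaussianPDFReal 0 1 z * (σ + z * (1 - 2 * p) / 2)| := by
        rw [abs_neg, abs_mul, abs_of_pos (by positivity)]
    _ ≤ _ := by
        gcongr
        exact abs_variance_mul_binomialMass_sub_le h0 h1 hk hσ hz
end

section
/- For all p ∈ [0.1689, 0.5] and all integers n ≥ 500000, Δ_n(p) ≤ ℰ₁(p)/σ + 0.05532/σ², where σ = √(npq), ℰ₁(p) = (2 − p)/(3√(2π)), and Δ_n(p) = sup_{x ∈ ℝ} |F_{n,p}(x) − Φ((x − np)/√(npq))|. -/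
/-- The left-continuous binomial distribution function
`F_{n,p}(x) = Σ_{0 ≤ i < x} C(n,i) p^i q^{n−i}`. -/
noncomputable def binomCDF (n : ℕ) (p x : ℝ) : ℝ :=
  ∑ i ∈ Finset.range (n + 1),
    if (i : ℝ) < x then (n.choose i : ℝ) * p ^ i * (1 - p) ^ (n - i) else 0

/-- `Δ_n(p) = sup_x |F_{n,p}(x) − Φ((x − np)/√(npq))|`. -/
noncomputable def Delta (n : ℕ) (p : ℝ) : ℝ :=
  ⨆ x : ℝ, |binomCDF n p x - Phi ((x - n * p) / Real.sqrt (n * p * (1 - p)))|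

/-!
Gil-Pelaez inversion writes both `F_{n,p}(x)` and `Φ(y/σ)` as `1/2 + π⁻¹ ∫ Im (e^{iyt} K(t)) dt`;
for the lattice distribution `y` is the centred midpoint `⌈x⌉ - 1/2 - np` of the lattice cell of
`x`. The difference of the two kernels `K` does not depend on `y`. Its leading part comes from the
third cumulant of the Bernoulli law and integrates to `|1 - 2p| / (6 √(2π) σ)`, the rest is
`O(σ⁻²)`. Returning from the midpoint to `x` moves `Φ` by at most `1 / (2 √(2π) σ)`, since its
density is at most `1 / √(2π)`. The two terms of order `σ⁻¹` add up to `ℰ₁(p)/σ` when `p ≤ 1/2`.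
-/

open MeasureTheory Set Real
open Complex (I)

/-! ### The Dirichlet kernel on a half period -/

lemma sin_add_half_mul_eq (m : ℕ) (t : ℝ) :
    sin ((m + 1 / 2) * t) =
      2 * sin (t / 2) * (1 / 2 + ∑ k ∈ Finset.range m, cos ((k + 1) * t)) := by
  induction m with
  | zero =>
    rw [Nat.cast_zero, zero_add, one_div_mul_eq_div, Finset.range_zero, Finset.sum_empty]
    ring
  | succ m ih =>
    have hstep : sin (((m + 1 : ℕ) + 1 / 2) * t) =
        sin ((m + 1 / 2) * t) + 2 * sin (t / 2) * cos ((m + 1) * t) := by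
      rw [show ((m + 1 : ℕ) + 1 / 2 : ℝ) * t = (m + 1) * t + t / 2 by push_cast; ring,
        show (m + 1 / 2 : ℝ) * t = (m + 1) * t - t / 2 by ring, sin_add, sin_sub]
      ring
    rw [hstep, ih, Finset.sum_range_succ]
    ring

lemma eqOn_sin_add_half_mul_div_sin_half (m : ℕ) :
    EqOn (fun t : ℝ => sin ((m + 1 / 2) * t) / (2 * sin (t / 2)))
      (fun t => 1 / 2 + ∑ k ∈ Finset.range m, cos ((k + 1) * t)) (Ioc 0 π) := by
  intro t ht
  have hsin : 0 < sin (t / 2) :=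
    sin_pos_of_pos_of_lt_pi (by linarith [ht.1]) (by linarith [ht.1, ht.2])
  simp only [sin_add_half_mul_eq]
  exact mul_div_cancel_left₀ _ (by positivity)

lemma integral_cos_succ_mul (k : ℕ) : ∫ t in (0 : ℝ)..π, cos ((k + 1) * t) = 0 := by
  have hk : (k + 1 : ℝ) ≠ 0 := by positivity
  rw [intervalIntegral.integral_comp_mul_left _ hk, integral_cos, mul_zero, sin_zero,
    ← Nat.cast_succ, sin_nat_mul_pi, sub_zero, smul_zero]

lemma sin_negSucc_add_half_mul (k : ℕ) (t : ℝ) :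
    sin (((Int.negSucc k : ℤ) + 1 / 2) * t) = -sin ((k + 1 / 2) * t) := by
  rw [← sin_neg]
  push_cast
  ring_nf

lemma integrableOn_sin_add_half_mul_div_sin_half (m : ℤ) :
    IntegrableOn (fun t : ℝ => sin ((m + 1 / 2) * t) / (2 * sin (t / 2))) (Ioc 0 π) := by
  have hnat (k : ℕ) :
      IntegrableOn (fun t : ℝ => sin ((k + 1 / 2) * t) / (2 * sin (t / 2))) (Ioc 0 π) := by
    rw [integrableOn_congr_fun (eqOn_sin_add_half_mul_div_sin_half k) measurableSet_Ioc]
    exact (Continuous.integrableOn_Icc (by fun_prop)).mono_set Ioc_subset_Icc_self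
  cases m with
  | ofNat k => simpa using hnat k
  | negSucc k =>
    simp only [sin_negSucc_add_half_mul, neg_div]
    exact (hnat k).neg

lemma integral_sin_add_half_mul_div_sin_half (m : ℤ) :
    ∫ t in Ioc 0 π, sin ((m + 1 / 2) * t) / (2 * sin (t / 2)) =
      if 0 ≤ m then π / 2 else -(π / 2) := by
  have hnat (k : ℕ) : ∫ t in Ioc 0 π, sin ((k + 1 / 2) * t) / (2 * sin (t / 2)) = π / 2 := by
    have hcos (j : ℕ) : IntervalIntegrable (fun t : ℝ => cos ((j + 1) * t)) volume 0 π :=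
      Continuous.intervalIntegrable (by fun_prop) _ _
    have hsum : IntervalIntegrable
        (fun t : ℝ => ∑ j ∈ Finset.range k, cos ((j + 1) * t)) volume 0 π :=
      Continuous.intervalIntegrable (by fun_prop) _ _
    rw [setIntegral_congr_fun measurableSet_Ioc (eqOn_sin_add_half_mul_div_sin_half k),
      ← intervalIntegral.integral_of_le pi_pos.le,
      intervalIntegral.integral_add intervalIntegrable_const hsum,
      intervalIntegral.integral_finsetSum fun j _ => hcos j]
    simp only [integral_cos_succ_mul, Finset.sum_const_zero, intervalIntegral.integral_const,
      smul_eq_mul]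
    ring
  cases m with
  | ofNat k => simpa using hnat k
  | negSucc k =>
    simp only [sin_negSucc_add_half_mul, neg_div, integral_neg, hnat, Int.negSucc_not_nonneg,
      if_false]

/-! ### Fourier inversion for the binomial distribution -/

/-- The probability that a binomial variable with parameters `n` and `p` equals `i`, for `i ≤ n`. -/
noncomputable def binomWeight (n : ℕ) (p : ℝ) (i : ℕ) : ℝ :=
  n.choose i * p ^ i * (1 - p) ^ (n - i)

/-- The characteristic function `E[exp (-it(X - p))]` of a centred Bernoulli variable, taken at `-t`
so that it pairs with `exp (iyt)` in the inversion formula. -/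
noncomputable def bernoulliChar (p t : ℝ) : ℂ :=
  (1 - p : ℝ) * Complex.exp ((p * t : ℝ) * I) + p * Complex.exp ((-((1 - p) * t) : ℝ) * I)

/-- The Fourier kernel of the centred binomial distribution: its characteristic function times
the half-period Dirichlet factor `1 / (2 sin (t/2))` of the integer lattice. -/
noncomputable def latticeKernel (n : ℕ) (p : ℝ) : ℝ → ℂ :=
  (Ioc 0 π).indicator fun t => bernoulliChar p t ^ n / (2 * sin (t / 2) : ℝ)

lemma sum_binomWeight (n : ℕ) (p : ℝ) : ∑ i ∈ Finset.range (n + 1), binomWeight n p i = 1 := by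
  have hbinom := add_pow p (1 - p) n
  rw [add_sub_cancel, one_pow] at hbinom
  rw [hbinom]
  exact Finset.sum_congr rfl fun i _ => by rw [binomWeight, mul_assoc, mul_comm]

lemma cexp_mul_bernoulliChar_pow (n : ℕ) (p s t : ℝ) :
    Complex.exp (((s - n * p) * t : ℝ) * I) * bernoulliChar p t ^ n =
      ∑ i ∈ Finset.range (n + 1),
        (binomWeight n p i : ℂ) * Complex.exp (((s - i) * t : ℝ) * I) := by
  rw [bernoulliChar, add_comm, add_pow, Finset.mul_sum]
  refine Finset.sum_congr rfl fun i hi => ?_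
  have hin : i ≤ n := Finset.mem_range_succ_iff.1 hi
  have hphase : Complex.exp (((s - i) * t : ℝ) * I) =
      Complex.exp (((s - n * p) * t : ℝ) * I) *
        (Complex.exp (i * ((-((1 - p) * t) : ℝ) * I)) *
          Complex.exp ((n - i : ℕ) * ((p * t : ℝ) * I))) := by
    rw [← Complex.exp_add, ← Complex.exp_add]
    congr 1
    push_cast [Nat.cast_sub hin]
    ring
  rw [hphase, mul_pow, mul_pow, ← Complex.exp_nat_mul, ← Complex.exp_nat_mul, binomWeight]
  push_cast
  ring

lemma im_cexp_mul_latticeKernel (n : ℕ) (p s : ℝ) :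
    (fun t : ℝ => (Complex.exp (((s - n * p) * t : ℝ) * I) * latticeKernel n p t).im) =
      (Ioc 0 π).indicator fun t => ∑ i ∈ Finset.range (n + 1),
        binomWeight n p i * (sin ((s - i) * t) / (2 * sin (t / 2))) := by
  funext t
  by_cases ht : t ∈ Ioc 0 π
  · rw [latticeKernel, indicator_of_mem ht, indicator_of_mem ht, ← mul_div_assoc,
      cexp_mul_bernoulliChar_pow, Complex.div_ofReal_im, Complex.im_sum, Finset.sum_div]
    simp only [Complex.im_ofReal_mul, Complex.exp_ofReal_mul_I_im, mul_div_assoc]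
  · rw [latticeKernel, indicator_of_notMem ht, indicator_of_notMem ht, mul_zero, Complex.zero_im]

lemma ceil_sub_half_sub_natCast (x : ℝ) (i : ℕ) :
    (⌈x⌉ : ℝ) - 1 / 2 - i = (⌈x⌉ - 1 - i : ℤ) + 1 / 2 := by
  push_cast
  ring

lemma integrableOn_binomWeight_mul_sin_div (n : ℕ) (p x : ℝ) (i : ℕ) :
    IntegrableOn (fun t : ℝ =>
      binomWeight n p i * (sin (((⌈x⌉ : ℝ) - 1 / 2 - i) * t) / (2 * sin (t / 2)))) (Ioc 0 π) := by
  simp only [ceil_sub_half_sub_natCast]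
  exact (integrableOn_sin_add_half_mul_div_sin_half _).const_mul _

lemma ite_natCast_lt_eq_integral (x : ℝ) (i : ℕ) :
    (if (i : ℝ) < x then (1 : ℝ) else 0) =
      1 / 2 + π⁻¹ * ∫ t in Ioc 0 π, sin (((⌈x⌉ : ℝ) - 1 / 2 - i) * t) / (2 * sin (t / 2)) := by
  have hlt : (i : ℝ) < x ↔ 0 ≤ ⌈x⌉ - 1 - (i : ℤ) := by
    rw [← Int.cast_natCast, ← Int.lt_ceil]
    omega
  simp only [ceil_sub_half_sub_natCast, integral_sin_add_half_mul_div_sin_half, hlt]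
  split_ifs <;> field_simp <;> norm_num

lemma integrableOn_im_cexp_mul_latticeKernel (n : ℕ) (p x : ℝ) :
    IntegrableOn (fun t : ℝ => (Complex.exp ((((⌈x⌉ : ℝ) - 1 / 2 - n * p) * t : ℝ) * I) *
      latticeKernel n p t).im) (Ioi 0) := by
  rw [im_cexp_mul_latticeKernel]
  exact ((integrable_indicator_iff measurableSet_Ioc).2 (integrable_finsetSum _ fun i _ =>
    integrableOn_binomWeight_mul_sin_div n p x i)).integrableOn

lemma binomCDF_eq_integral (n : ℕ) (p x : ℝ) :
    binomCDF n p x = 1 / 2 + π⁻¹ * ∫ t in Ioi 0,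
      (Complex.exp ((((⌈x⌉ : ℝ) - 1 / 2 - n * p) * t : ℝ) * I) * latticeKernel n p t).im := by
  rw [im_cexp_mul_latticeKernel, setIntegral_indicator measurableSet_Ioc,
    inter_eq_self_of_subset_right Ioc_subset_Ioi_self,
    integral_finsetSum _ fun i _ => integrableOn_binomWeight_mul_sin_div n p x i]
  simp only [integral_const_mul]
  calc binomCDF n p x
      = ∑ i ∈ Finset.range (n + 1), binomWeight n p i * if (i : ℝ) < x then 1 else 0 := by
        simp only [binomCDF, binomWeight, mul_ite, mul_one, mul_zero]
    _ = (∑ i ∈ Finset.range (n + 1), binomWeight n p i) / 2 +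
          π⁻¹ * ∑ i ∈ Finset.range (n + 1), binomWeight n p i *
            ∫ t in Ioc 0 π, sin (((⌈x⌉ : ℝ) - 1 / 2 - i) * t) / (2 * sin (t / 2)) := by
        simp only [ite_natCast_lt_eq_integral, mul_add, Finset.sum_add_distrib, Finset.sum_div,
          mul_one_div, Finset.mul_sum, mul_left_comm π⁻¹]
    _ = _ := by rw [sum_binomWeight]

/-! ### Fourier inversion for the normal distribution -/

/-- The Fourier kernel of the centred normal distribution with variance `V`. -/
noncomputable def gaussianKernel (V t : ℝ) : ℂ :=
  (exp (-(V / 2) * t ^ 2) / t : ℝ)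

lemma hasDerivAt_Phi_s18 (x : ℝ) : HasDerivAt Phi ((√(2 * π))⁻¹ * exp (-x ^ 2 / 2)) x := by
  have hint : Integrable fun t : ℝ => exp (-t ^ 2 / 2) := by
    convert integrable_exp_neg_mul_sq (b := 1 / 2) (by norm_num) using 2 with t
    ring_nf
  have hPhi : Phi = fun x => (√(2 * π))⁻¹ *
      ((∫ t in Iic 0, exp (-t ^ 2 / 2)) + ∫ t in (0 : ℝ)..x, exp (-t ^ 2 / 2)) := by
    funext x
    rw [Phi, ← integral_Iic_eq_integral_Iio,
      ← intervalIntegral.integral_Iic_sub_Iic hint.integrableOn hint.integrableOn,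
      add_sub_cancel]
  rw [hPhi]
  have hcont : Continuous fun t : ℝ => exp (-t ^ 2 / 2) := by fun_prop
  exact ((hcont.integral_hasStrictDerivAt 0 x).hasDerivAt.const_add _).const_mul _

lemma Phi_zero : Phi 0 = 1 / 2 := by
  have hhalf : ∫ t in Iic (0 : ℝ), exp (-t ^ 2 / 2) = √(2 * π) / 2 := by
    rw [← neg_zero, ← integral_comp_neg_Ioi (f := fun t : ℝ => exp (-t ^ 2 / 2))]
    convert integral_gaussian_Ioi (1 / 2) using 4 <;> ring
  rw [Phi, ← integral_Iic_eq_integral_Iio, hhalf]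
  field_simp

lemma abs_Phi_sub_Phi_le (a b : ℝ) : |Phi a - Phi b| ≤ (√(2 * π))⁻¹ * |a - b| := by
  have hdensity (x : ℝ) : ‖(√(2 * π))⁻¹ * exp (-x ^ 2 / 2)‖ ≤ (√(2 * π))⁻¹ := by
    rw [norm_of_nonneg (by positivity)]
    refine mul_le_of_le_one_right (by positivity) (exp_le_one_iff.2 ?_)
    linarith [sq_nonneg x]
  simpa only [norm_eq_abs] using Convex.norm_image_sub_le_of_norm_hasDerivWithin_le
    (fun x _ => (hasDerivAt_Phi_s18 x).hasDerivWithinAt) (fun x _ => hdensity x) convex_univ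
    (mem_univ b) (mem_univ a)

lemma integral_exp_neg_mul_sq_mul_cos {b : ℝ} (hb : 0 < b) (y : ℝ) :
    ∫ x : ℝ, exp (-b * x ^ 2) * cos (y * x) = √(π / b) * exp (-y ^ 2 / (4 * b)) := by
  have hre : 0 < (b : ℂ).re := hb
  have hint : Integrable fun x : ℝ => Complex.exp (I * y * x) * Complex.exp (-b * x ^ 2) := by
    refine (integrable_cexp_quadratic hre (I * y) 0).congr (.of_forall fun x => ?_)
    simp only [← Complex.exp_add]
    ring_nf
  have hreal (x : ℝ) : exp (-b * x ^ 2) * cos (y * x) =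
      RCLike.re (Complex.exp (I * y * x) * Complex.exp (-b * x ^ 2)) := by
    rw [← Complex.exp_ofReal_mul_I_re, ← Complex.re_ofReal_mul, RCLike.re_to_complex, mul_comm,
      Complex.ofReal_exp]
    push_cast
    ring_nf
  simp only [hreal]
  rw [integral_re hint, fourierIntegral_gaussian hre, sqrt_eq_rpow, RCLike.re_to_complex,
    ← Complex.ofReal_re (_ * _), Complex.ofReal_mul, Complex.ofReal_cpow (by positivity),
    Complex.ofReal_exp]
  push_cast
  rfl

lemma integral_Ioi_exp_neg_mul_sq_mul_cos {b : ℝ} (hb : 0 < b) (y : ℝ) :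
    ∫ t in Ioi (0 : ℝ), exp (-b * t ^ 2) * cos (y * t) =
      √(π / b) * exp (-y ^ 2 / (4 * b)) / 2 := by
  have habs (x : ℝ) : exp (-b * |x| ^ 2) * cos (y * |x|) = exp (-b * x ^ 2) * cos (y * x) := by
    rcases abs_choice x with hx | hx <;> simp [hx]
  have heven := integral_comp_abs (f := fun t => exp (-b * t ^ 2) * cos (y * t))
  simp only [habs, integral_exp_neg_mul_sq_mul_cos hb] at heven
  rw [heven, mul_div_cancel_left₀ _ two_ne_zero]

lemma integrableOn_exp_neg_mul_sq_mul_sin_div {b : ℝ} (hb : 0 < b) (y : ℝ) :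
    IntegrableOn (fun t => exp (-b * t ^ 2) * sin (y * t) / t) (Ioi 0) := by
  refine ((integrable_exp_neg_mul_sq hb).integrableOn.const_mul |y|).mono'
    (Measurable.aestronglyMeasurable (by fun_prop))
    ((ae_restrict_mem measurableSet_Ioi).mono fun t (ht : 0 < t) => ?_)
  rw [norm_div, norm_mul, norm_of_nonneg (exp_pos _).le, norm_of_nonneg ht.le, div_le_iff₀ ht]
  have hsin : |sin (y * t)| ≤ |y| * t := by
    simpa only [abs_mul, abs_of_pos ht] using abs_sin_le_abs (x := y * t)
  calc exp (-b * t ^ 2) * ‖sin (y * t)‖ ≤ exp (-b * t ^ 2) * (|y| * t) := by gcongr; exact hsin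
    _ = |y| * exp (-b * t ^ 2) * t := by ring

lemma hasDerivAt_integral_exp_neg_mul_sq_mul_sin_div {b : ℝ} (hb : 0 < b) (y : ℝ) :
    HasDerivAt (fun y => ∫ t in Ioi (0 : ℝ), exp (-b * t ^ 2) * sin (y * t) / t)
      (∫ t in Ioi (0 : ℝ), exp (-b * t ^ 2) * cos (y * t)) y := by
  refine (hasDerivAt_integral_of_dominated_loc_of_deriv_le (s := univ) Filter.univ_mem
    (.of_forall fun _ => Measurable.aestronglyMeasurable (by fun_prop))
    (integrableOn_exp_neg_mul_sq_mul_sin_div hb y)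
    (F := fun y t => exp (-b * t ^ 2) * sin (y * t) / t)
    (F' := fun y t => exp (-b * t ^ 2) * cos (y * t)) (bound := fun t => exp (-b * t ^ 2))
    (Continuous.aestronglyMeasurable (by fun_prop)) ?_
    (integrable_exp_neg_mul_sq hb).integrableOn ?_).2
  · refine .of_forall fun t x _ => ?_
    rw [norm_mul, norm_of_nonneg (exp_pos _).le]
    exact mul_le_of_le_one_right (exp_pos _).le (abs_cos_le_one _)
  · refine (ae_restrict_mem measurableSet_Ioi).mono fun t (ht : 0 < t) x _ => ?_
    have hlin : HasDerivAt (fun x : ℝ => x * t) t x := hasDerivAt_mul_const t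
    refine ((hlin.sin.const_mul (exp (-b * t ^ 2))).div_const t).congr_deriv ?_
    field_simp

lemma hasDerivAt_Phi_div_sqrt {V : ℝ} (hV : 0 < V) (y : ℝ) :
    HasDerivAt (fun y => Phi (y / √V))
      (π⁻¹ * ∫ t in Ioi (0 : ℝ), exp (-(V / 2) * t ^ 2) * cos (y * t)) y := by
  refine ((hasDerivAt_Phi_s18 (y / √V)).comp y ((hasDerivAt_id y).div_const √V)).congr_deriv ?_
  have hexp : -(y / √V) ^ 2 / 2 = -y ^ 2 / (4 * (V / 2)) := by
    rw [div_pow, sq_sqrt hV.le]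
    field_simp
    norm_num
  have hsqrt : √(π / (V / 2)) = √(2 * π) / √V := by
    rw [← sqrt_div (by positivity)]
    congr 1
    field_simp
  rw [integral_Ioi_exp_neg_mul_sq_mul_cos (half_pos hV), hexp, hsqrt]
  field_simp
  rw [sq_sqrt (by positivity)]

lemma im_cexp_mul_gaussianKernel (V y : ℝ) :
    (fun t : ℝ => (Complex.exp ((y * t : ℝ) * I) * gaussianKernel V t).im) =
      fun t => exp (-(V / 2) * t ^ 2) * sin (y * t) / t := by
  funext t
  rw [gaussianKernel, Complex.im_mul_ofReal, Complex.exp_ofReal_mul_I_im, mul_comm,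
    div_mul_eq_mul_div]

lemma Phi_div_sqrt_eq_integral {V : ℝ} (hV : 0 < V) (y : ℝ) :
    Phi (y / √V) = 1 / 2 +
      π⁻¹ * ∫ t in Ioi 0, (Complex.exp ((y * t : ℝ) * I) * gaussianKernel V t).im := by
  have hderiv (y : ℝ) : HasDerivAt (fun y => Phi (y / √V) -
      π⁻¹ * ∫ t in Ioi (0 : ℝ), exp (-(V / 2) * t ^ 2) * sin (y * t) / t) 0 y :=
    ((hasDerivAt_Phi_div_sqrt hV y).sub
      ((hasDerivAt_integral_exp_neg_mul_sq_mul_sin_div (half_pos hV) y).const_mul π⁻¹)).congr_deriv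
        (sub_self _)
  have hconst := is_const_of_deriv_eq_zero (fun y => (hderiv y).differentiableAt)
    (fun y => (hderiv y).deriv) y 0
  simp only [zero_div, Phi_zero, zero_mul, sin_zero, mul_zero, integral_zero, sub_zero] at hconst
  rw [im_cexp_mul_gaussianKernel, ← hconst, sub_add_cancel]

/-! ### The Bernoulli characteristic function -/

lemma norm_bernoulliChar_sq (p t : ℝ) :
    ‖bernoulliChar p t‖ ^ 2 = 1 - 4 * (p * (1 - p)) * sin (t / 2) ^ 2 := by
  have hre : (bernoulliChar p t).re = (1 - p) * cos (p * t) + p * cos ((1 - p) * t) := by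
    rw [bernoulliChar, Complex.add_re, Complex.re_ofReal_mul, Complex.re_ofReal_mul,
      Complex.exp_ofReal_mul_I_re, Complex.exp_ofReal_mul_I_re, cos_neg]
  have him : (bernoulliChar p t).im = (1 - p) * sin (p * t) - p * sin ((1 - p) * t) := by
    rw [bernoulliChar, Complex.add_im, Complex.im_ofReal_mul, Complex.im_ofReal_mul,
      Complex.exp_ofReal_mul_I_im, Complex.exp_ofReal_mul_I_im, sin_neg, mul_neg, ← sub_eq_add_neg]
  have hcos : cos (p * t) * cos ((1 - p) * t) - sin (p * t) * sin ((1 - p) * t) =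
      1 - 2 * sin (t / 2) ^ 2 := by
    rw [← cos_add, ← cos_two_mul_eq_one_sub]
    ring_nf
  rw [Complex.sq_norm, Complex.normSq_apply, hre, him]
  linear_combination (1 - p) ^ 2 * sin_sq_add_cos_sq (p * t) +
    p ^ 2 * sin_sq_add_cos_sq ((1 - p) * t) + 2 * p * (1 - p) * hcos

lemma norm_bernoulliChar_le (p t : ℝ) :
    ‖bernoulliChar p t‖ ≤ exp (-(2 * (p * (1 - p)) * sin (t / 2) ^ 2)) := by
  refine le_of_sq_le_sq ?_ (exp_pos _).le
  calc ‖bernoulliChar p t‖ ^ 2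
      = -(4 * (p * (1 - p)) * sin (t / 2) ^ 2) + 1 := by rw [norm_bernoulliChar_sq]; ring
    _ ≤ exp (-(4 * (p * (1 - p)) * sin (t / 2) ^ 2)) := add_one_le_exp _
    _ = exp (-(2 * (p * (1 - p)) * sin (t / 2) ^ 2)) ^ 2 := by
        rw [← exp_nat_mul]
        push_cast
        ring_nf

lemma mul_le_sin_half {t : ℝ} (ht0 : 0 ≤ t) (ht1 : t ≤ 1) : 23 / 48 * t ≤ sin (t / 2) := by
  rcases ht0.eq_or_lt with rfl | ht
  · simp
  have hcube : t ^ 3 ≤ t := pow_le_of_le_one ht0 ht1 three_ne_zero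
  linarith [sin_gt_sub_cube (half_pos ht)]

lemma norm_bernoulliChar_le_of_le_one {p t : ℝ} (hp0 : 0 ≤ p) (hp1 : p ≤ 1) (ht0 : 0 ≤ t)
    (ht1 : t ≤ 1) : ‖bernoulliChar p t‖ ≤ exp (-(11 / 24 * (p * (1 - p)) * t ^ 2)) := by
  have hv : 0 ≤ p * (1 - p) := mul_nonneg hp0 (sub_nonneg.2 hp1)
  have hsin : 11 / 48 * t ^ 2 ≤ sin (t / 2) ^ 2 :=
    calc 11 / 48 * t ^ 2 ≤ (23 / 48 * t) ^ 2 := by linarith [sq_nonneg t]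
      _ ≤ sin (t / 2) ^ 2 := by gcongr; exact mul_le_sin_half ht0 ht1
  refine (norm_bernoulliChar_le p t).trans (exp_le_exp.2 ?_)
  linarith [mul_le_mul_of_nonneg_left hsin hv]

/-- The expansion through third order of the cumulant generating function `log (bernoulliChar p t)`,
whose second and third cumulants are `p (1 - p)` and `p (1 - p) (1 - 2p)`. -/
noncomputable def bernoulliCumulant (p t : ℝ) : ℂ :=
  (-(p * (1 - p)) * t ^ 2 / 2 : ℝ) + (p * (1 - p) * (1 - 2 * p) * t ^ 3 / 6 : ℝ) * I

lemma norm_exp_nat_mul_bernoulliCumulant (n : ℕ) (p t : ℝ) :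
    ‖Complex.exp (n * bernoulliCumulant p t)‖ = exp (-(n * p * (1 - p) / 2) * t ^ 2) := by
  rw [Complex.norm_exp, ← Complex.ofReal_natCast, Complex.re_ofReal_mul, bernoulliCumulant,
    Complex.add_re, Complex.ofReal_re, Complex.re_ofReal_mul, Complex.I_re]
  ring_nf

lemma norm_cexp_mul_I_sub_taylor_le {x : ℝ} (hx : |x| ≤ 1) :
    ‖Complex.exp (x * I) -
      (1 + x * I - x ^ 2 / 2 - x ^ 3 / 6 * I + x ^ 4 / 24)‖ ≤ |x| ^ 5 / 100 := by
  have hnorm : ‖(x : ℂ) * I‖ = |x| := by simp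
  have hbound := Complex.exp_bound (x := x * I) (hnorm ▸ hx) (n := 5) (by norm_num)
  have hsum : ∑ m ∈ Finset.range 5, ((x : ℂ) * I) ^ m / (m.factorial : ℂ) =
      1 + x * I - x ^ 2 / 2 - x ^ 3 / 6 * I + x ^ 4 / 24 := by
    simp only [Finset.sum_range_succ, Finset.sum_range_zero, Nat.factorial, mul_pow,
      Complex.I_sq, Complex.I_pow_three, Complex.I_pow_four]
    push_cast
    ring
  rw [hnorm, hsum] at hbound
  refine hbound.trans_eq ?_
  norm_num [Nat.factorial]
  ring

section Expansion

variable {p t : ℝ} (hp0 : 0 ≤ p) (hp1 : p ≤ 1) (ht0 : 0 ≤ t) (ht1 : t ≤ 1)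
include hp0 hp1 ht0 ht1

lemma norm_bernoulliChar_sub_taylor_le :
    ‖bernoulliChar p t - (1 - p * (1 - p) * t ^ 2 / 2 + p * (1 - p) * (1 - 2 * p) * t ^ 3 / 6 * I +
      p * (1 - p) * (1 - 3 * (p * (1 - p))) * t ^ 4 / 24)‖ ≤ p * (1 - p) * (t ^ 5 / 50) := by
  have hq0 : 0 ≤ 1 - p := sub_nonneg.2 hp1
  have hq1 : 1 - p ≤ 1 := sub_le_self _ hp0
  have hP := norm_cexp_mul_I_sub_taylor_le (x := p * t)
    (by rw [abs_of_nonneg (by positivity)]; exact mul_le_one₀ hp1 ht0 ht1)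
  have hQ := norm_cexp_mul_I_sub_taylor_le (x := -((1 - p) * t))
    (by rw [abs_neg, abs_of_nonneg (by positivity)]; exact mul_le_one₀ hq1 ht0 ht1)
  rw [abs_of_nonneg (by positivity), mul_pow] at hP
  rw [abs_neg, abs_of_nonneg (by positivity), mul_pow] at hQ
  have hp5 : p ^ 5 ≤ p := pow_le_of_le_one hp0 hp1 (by norm_num)
  have hq5 : (1 - p) ^ 5 ≤ 1 - p := pow_le_of_le_one hq0 hq1 (by norm_num)
  set rP := Complex.exp ((p * t : ℝ) * I) - (1 + (p * t : ℝ) * I - (p * t : ℝ) ^ 2 / 2 -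
    (p * t : ℝ) ^ 3 / 6 * I + (p * t : ℝ) ^ 4 / 24) with hrP
  set rQ := Complex.exp ((-((1 - p) * t) : ℝ) * I) - (1 + (-((1 - p) * t) : ℝ) * I -
    (-((1 - p) * t) : ℝ) ^ 2 / 2 - (-((1 - p) * t) : ℝ) ^ 3 / 6 * I +
    (-((1 - p) * t) : ℝ) ^ 4 / 24) with hrQ
  have hdecomp : bernoulliChar p t - (1 - p * (1 - p) * t ^ 2 / 2 +
      p * (1 - p) * (1 - 2 * p) * t ^ 3 / 6 * I +
      p * (1 - p) * (1 - 3 * (p * (1 - p))) * t ^ 4 / 24) = (1 - p : ℝ) * rP + p * rQ := by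
    rw [bernoulliChar, hrP, hrQ]
    push_cast
    ring
  calc _ ≤ ‖((1 - p : ℝ) : ℂ) * rP‖ + ‖(p : ℂ) * rQ‖ := hdecomp ▸ norm_add_le _ _
    _ = (1 - p) * ‖rP‖ + p * ‖rQ‖ := by
        rw [norm_mul, norm_mul, Complex.norm_of_nonneg hp0, Complex.norm_of_nonneg hq0]
    _ ≤ (1 - p) * (p ^ 5 * t ^ 5 / 100) + p * ((1 - p) ^ 5 * t ^ 5 / 100) := by gcongr
    _ ≤ (1 - p) * (p * t ^ 5 / 100) + p * ((1 - p) * t ^ 5 / 100) := by gcongr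
    _ = p * (1 - p) * (t ^ 5 / 50) := by ring

lemma norm_bernoulliCumulant_le : ‖bernoulliCumulant p t‖ ≤ 2 / 3 * (p * (1 - p) * t ^ 2) := by
  have hv : 0 ≤ p * (1 - p) := mul_nonneg hp0 (sub_nonneg.2 hp1)
  have hskew : |1 - 2 * p| ≤ 1 := abs_le.2 ⟨by linarith, by linarith⟩
  have hcube : t ^ 3 ≤ t ^ 2 := pow_le_pow_of_le_one ht0 ht1 (by norm_num)
  have hreal : ‖((-(p * (1 - p)) * t ^ 2 / 2 : ℝ) : ℂ)‖ = p * (1 - p) * t ^ 2 / 2 := by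
    rw [Complex.norm_real, neg_mul, neg_div, norm_neg,
      norm_of_nonneg (div_nonneg (mul_nonneg hv (sq_nonneg t)) zero_le_two)]
  have himag : ‖((p * (1 - p) * (1 - 2 * p) * t ^ 3 / 6 : ℝ) : ℂ) * I‖ =
      p * (1 - p) * |1 - 2 * p| * t ^ 3 / 6 := by
    simp only [norm_mul, Complex.norm_I, mul_one, Complex.norm_real, norm_eq_abs, abs_div,
      abs_mul, abs_pow, abs_of_nonneg ht0, abs_of_nonneg hp0, abs_of_nonneg (sub_nonneg.2 hp1),
      Nat.abs_ofNat]
  calc ‖bernoulliCumulant p t‖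
      ≤ p * (1 - p) * t ^ 2 / 2 + p * (1 - p) * |1 - 2 * p| * t ^ 3 / 6 :=
        hreal ▸ himag ▸ norm_add_le _ _
    _ ≤ p * (1 - p) * t ^ 2 / 2 + p * (1 - p) * 1 * t ^ 2 / 6 := by gcongr
    _ = 2 / 3 * (p * (1 - p) * t ^ 2) := by ring

lemma norm_cexp_bernoulliCumulant_sub_taylor_le :
    ‖Complex.exp (bernoulliCumulant p t) -
      (1 + bernoulliCumulant p t + bernoulliCumulant p t ^ 2 / 2)‖ ≤
      p * (1 - p) * (t ^ 5 / 200) := by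
  have hv0 : 0 ≤ p * (1 - p) := mul_nonneg hp0 (sub_nonneg.2 hp1)
  have hv1 : p * (1 - p) ≤ 1 / 4 := by linarith [sq_nonneg (1 - 2 * p)]
  have hnorm := norm_bernoulliCumulant_le hp0 hp1 ht0 ht1
  have hvt : p * (1 - p) * t ^ 2 ≤ 1 / 4 * 1 := by gcongr; exact pow_le_one₀ ht0 ht1
  have ht6 : t ^ 6 ≤ t ^ 5 := pow_le_pow_of_le_one ht0 ht1 (by norm_num)
  have hbound := Complex.exp_bound (x := bernoulliCumulant p t) (by linarith) three_pos
  have hsum : ∑ m ∈ Finset.range 3, bernoulliCumulant p t ^ m / (m.factorial : ℂ) =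
      1 + bernoulliCumulant p t + bernoulliCumulant p t ^ 2 / 2 := by
    simp [Finset.sum_range_succ, Nat.factorial]
  calc _ ≤ ‖bernoulliCumulant p t‖ ^ 3 * (2 / 9) := by
        rw [← hsum]
        refine hbound.trans_eq ?_
        norm_num [Nat.factorial]
    _ ≤ (2 / 3 * (p * (1 - p) * t ^ 2)) ^ 3 * (2 / 9) := by gcongr
    _ = 16 / 243 * (p * (1 - p) * (p * (1 - p)) ^ 2 * t ^ 6) := by ring
    _ ≤ 16 / 243 * (p * (1 - p) * (1 / 4) ^ 2 * t ^ 5) := by gcongr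
    _ ≤ p * (1 - p) * (t ^ 5 / 200) := by linarith [mul_nonneg hv0 (pow_nonneg ht0 5)]

-- Since the fourth central moment is `v (1 - 3v)` with `v = p (1 - p)`, the `t⁴` coefficient left
-- over is the fourth cumulant `v (1 - 6v)`, divided by `4!`.
lemma norm_taylor_sub_bernoulliCumulant_taylor_le :
    ‖(1 - p * (1 - p) * t ^ 2 / 2 + p * (1 - p) * (1 - 2 * p) * t ^ 3 / 6 * I +
        p * (1 - p) * (1 - 3 * (p * (1 - p))) * t ^ 4 / 24) -
      (1 + bernoulliCumulant p t + bernoulliCumulant p t ^ 2 / 2)‖ ≤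
      p * (1 - p) * (|1 - 6 * (p * (1 - p))| * t ^ 4 / 24 + t ^ 5 / 40) := by
  have hv0 : 0 ≤ p * (1 - p) := mul_nonneg hp0 (sub_nonneg.2 hp1)
  have hv1 : p * (1 - p) ≤ 1 / 4 := by linarith [sq_nonneg (1 - 2 * p)]
  have hskew : |1 - 2 * p| ≤ 1 := abs_le.2 ⟨by linarith, by linarith⟩
  have ht6 : t ^ 6 ≤ t ^ 5 := pow_le_pow_of_le_one ht0 ht1 (by norm_num)
  have hremainder : (1 - p * (1 - p) * t ^ 2 / 2 + p * (1 - p) * (1 - 2 * p) * t ^ 3 / 6 * I +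
        p * (1 - p) * (1 - 3 * (p * (1 - p))) * t ^ 4 / 24) -
      (1 + bernoulliCumulant p t + bernoulliCumulant p t ^ 2 / 2) =
      (p * (1 - p) : ℝ) * (((1 - 6 * (p * (1 - p))) * t ^ 4 / 24 : ℝ) +
        (p * (1 - p) * (1 - 2 * p) * t ^ 5 / 12 : ℝ) * I +
        (p * (1 - p) * (1 - 2 * p) ^ 2 * t ^ 6 / 72 : ℝ)) := by
    rw [bernoulliCumulant]
    push_cast
    ring_nf
    rw [Complex.I_sq]
    ring
  rw [hremainder, norm_mul, Complex.norm_of_nonneg hv0]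
  gcongr
  calc _ ≤ |1 - 6 * (p * (1 - p))| * t ^ 4 / 24 + p * (1 - p) * |1 - 2 * p| * t ^ 5 / 12 +
        p * (1 - p) * |1 - 2 * p| ^ 2 * t ^ 6 / 72 := by
        refine norm_add₃_le.trans_eq ?_
        simp only [norm_mul, Complex.norm_I, mul_one, Complex.norm_real, norm_eq_abs, abs_div,
          abs_mul, abs_pow, abs_of_nonneg ht0, abs_of_nonneg hp0, abs_of_nonneg (sub_nonneg.2 hp1),
          Nat.abs_ofNat]
    _ ≤ |1 - 6 * (p * (1 - p))| * t ^ 4 / 24 + 1 / 4 * 1 * t ^ 5 / 12 +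
        1 / 4 * 1 ^ 2 * t ^ 5 / 72 := by gcongr
    _ ≤ |1 - 6 * (p * (1 - p))| * t ^ 4 / 24 + t ^ 5 / 40 := by linarith [pow_nonneg ht0 5]

lemma norm_bernoulliChar_sub_cexp_bernoulliCumulant_le :
    ‖bernoulliChar p t - Complex.exp (bernoulliCumulant p t)‖ ≤
      p * (1 - p) * (|1 - 6 * (p * (1 - p))| * t ^ 4 / 24 + t ^ 5 / 10) := by
  have hchar := norm_bernoulliChar_sub_taylor_le hp0 hp1 ht0 ht1
  have htaylor := norm_taylor_sub_bernoulliCumulant_taylor_le hp0 hp1 ht0 ht1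
  have hexp := norm_cexp_bernoulliCumulant_sub_taylor_le hp0 hp1 ht0 ht1
  rw [norm_sub_rev] at hexp
  have hv : 0 ≤ p * (1 - p) := mul_nonneg hp0 (sub_nonneg.2 hp1)
  refine (norm_sub_le_norm_sub_add_norm_sub _ _ _).trans
    ((add_le_add_right (norm_sub_le_norm_sub_add_norm_sub _ _ _) _).trans
      ((add_le_add hchar (add_le_add htaylor hexp)).trans ?_))
  linarith [mul_nonneg hv (pow_nonneg ht0 5)]

end Expansion

/-! ### Comparison of the Fourier kernels -/

lemma norm_pow_sub_pow_le {R : Type*} [SeminormedCommRing R] [NormOneClass R] {a b : R} {M : ℝ}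
    (ha : ‖a‖ ≤ M) (hb : ‖b‖ ≤ M) (n : ℕ) : ‖a ^ n - b ^ n‖ ≤ n * M ^ (n - 1) * ‖a - b‖ := by
  have hM : 0 ≤ M := (norm_nonneg a).trans ha
  have hterm (i : ℕ) (hi : i ∈ Finset.range n) : ‖a ^ i * b ^ (n - 1 - i)‖ ≤ M ^ (n - 1) :=
    calc ‖a ^ i * b ^ (n - 1 - i)‖ ≤ ‖a ^ i‖ * ‖b ^ (n - 1 - i)‖ := norm_mul_le _ _
      _ ≤ ‖a‖ ^ i * ‖b‖ ^ (n - 1 - i) := by gcongr <;> exact norm_pow_le _ _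
      _ ≤ M ^ i * M ^ (n - 1 - i) := by gcongr
      _ = M ^ (n - 1) := by
          rw [← pow_add, Nat.add_sub_cancel' (Nat.le_sub_one_of_lt (Finset.mem_range.1 hi))]
  rw [← (Commute.all a b).geom_sum₂_mul]
  refine (norm_mul_le _ _).trans ?_
  gcongr
  simpa using norm_sum_le_of_le _ hterm

lemma abs_inv_two_sin_half_sub_inv_le {t : ℝ} (ht0 : 0 < t) (ht1 : t ≤ 1) :
    |(2 * sin (t / 2))⁻¹ - t⁻¹| ≤ t / 23 := by
  have hlower : 23 / 24 * t ≤ 2 * sin (t / 2) := by linarith [mul_le_sin_half ht0.le ht1]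
  have hupper : 2 * sin (t / 2) ≤ t := by linarith [sin_lt (half_pos ht0)]
  have hpos : 0 < 2 * sin (t / 2) := by linarith
  rw [inv_sub_inv hpos.ne' ht0.ne', abs_of_nonneg (div_nonneg (by linarith) (by positivity)),
    div_le_iff₀ (by positivity)]
  calc t - 2 * sin (t / 2) ≤ t / 23 * (23 / 24 * t * t) := by
        linarith [sin_gt_sub_cube (half_pos ht0)]
    _ ≤ t / 23 * (2 * sin (t / 2) * t) := by gcongr

lemma exp_neg_mul_sq_pow_pred_le {n : ℕ} (hn : 55 ≤ n) {v : ℝ} (hv : 0 ≤ v) (t : ℝ) :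
    exp (-(11 / 24 * v * t ^ 2)) ^ (n - 1) ≤ exp (-(9 / 20 * (n * v)) * t ^ 2) := by
  have hn' : 9 / 20 * (n : ℝ) ≤ 11 / 24 * (n - 1 : ℕ) := by
    rw [Nat.cast_pred (by omega)]
    linarith [(Nat.ofNat_le_cast (α := ℝ)).2 hn]
  rw [← exp_nat_mul, exp_le_exp]
  linarith [mul_le_mul_of_nonneg_right hn' (mul_nonneg hv (sq_nonneg t))]

lemma norm_cexp_nat_mul_bernoulliCumulant_sub_le (n : ℕ) {p t : ℝ} (hp0 : 0 ≤ p) (hp1 : p ≤ 1)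
    (ht0 : 0 ≤ t) :
    ‖Complex.exp (n * bernoulliCumulant p t) - (exp (-(n * p * (1 - p) / 2) * t ^ 2) : ℝ)‖ ≤
      n * p * (1 - p) * |1 - 2 * p| * t ^ 3 / 6 * exp (-(n * p * (1 - p) / 2) * t ^ 2) := by
  have hcumulant : n * bernoulliCumulant p t = (-(n * p * (1 - p) / 2) * t ^ 2 : ℝ) +
      I * (n * p * (1 - p) * (1 - 2 * p) * t ^ 3 / 6 : ℝ) := by
    rw [bernoulliCumulant]
    push_cast
    ring
  rw [hcumulant, Complex.exp_add, ← Complex.ofReal_exp, ← mul_sub_one, norm_mul,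
    Complex.norm_of_nonneg (exp_pos _).le, mul_comm]
  gcongr
  refine norm_exp_I_mul_ofReal_sub_one_le.trans_eq ?_
  simp only [norm_eq_abs, abs_div, abs_mul, abs_pow, abs_of_nonneg ht0, abs_of_nonneg hp0,
    abs_of_nonneg (sub_nonneg.2 hp1), Nat.abs_cast, Nat.abs_ofNat]

section SmallFrequency

variable {n : ℕ} {p t : ℝ} (hn : 55 ≤ n) (hp0 : 0 ≤ p) (hp1 : p ≤ 1) (ht0 : 0 < t) (ht1 : t ≤ 1)
include hn hp0 hp1 ht0 ht1

lemma norm_bernoulliChar_pow_le :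
    ‖bernoulliChar p t ^ n‖ ≤ exp (-(9 / 20 * (n * p * (1 - p))) * t ^ 2) := by
  have hv : 0 ≤ p * (1 - p) := mul_nonneg hp0 (sub_nonneg.2 hp1)
  have hM := norm_bernoulliChar_le_of_le_one hp0 hp1 ht0.le ht1
  calc ‖bernoulliChar p t ^ n‖ ≤ exp (-(11 / 24 * (p * (1 - p)) * t ^ 2)) ^ n := by
        rw [norm_pow]
        gcongr
    _ ≤ exp (-(11 / 24 * (p * (1 - p)) * t ^ 2)) ^ (n - 1) :=
        pow_le_pow_of_le_one (exp_pos _).le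
          (exp_le_one_iff.2 (neg_nonpos.2 (by positivity))) (Nat.sub_le _ _)
    _ ≤ exp (-(9 / 20 * (n * p * (1 - p))) * t ^ 2) := by
        rw [mul_assoc (n : ℝ)]
        exact exp_neg_mul_sq_pow_pred_le hn hv t

lemma norm_bernoulliChar_pow_sub_cexp_le :
    ‖bernoulliChar p t ^ n - Complex.exp (n * bernoulliCumulant p t)‖ ≤
      n * p * (1 - p) * (t ^ 4 / 24 + t ^ 5 / 10) *
        exp (-(9 / 20 * (n * p * (1 - p))) * t ^ 2) := by
  have hv0 : 0 ≤ p * (1 - p) := mul_nonneg hp0 (sub_nonneg.2 hp1)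
  have hkurtosis : |1 - 6 * (p * (1 - p))| ≤ 1 :=
    abs_le.2 ⟨by linarith [sq_nonneg (1 - 2 * p)], by linarith⟩
  have hchar := norm_bernoulliChar_le_of_le_one hp0 hp1 ht0.le ht1
  have hcexp : ‖Complex.exp (bernoulliCumulant p t)‖ ≤
      exp (-(11 / 24 * (p * (1 - p)) * t ^ 2)) := by
    have hnorm := norm_exp_nat_mul_bernoulliCumulant 1 p t
    rw [Nat.cast_one, Nat.cast_one, one_mul, one_mul] at hnorm
    rw [hnorm, exp_le_exp]
    linarith [mul_nonneg hv0 (sq_nonneg t)]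
  rw [Complex.exp_nat_mul]
  calc ‖bernoulliChar p t ^ n - Complex.exp (bernoulliCumulant p t) ^ n‖
      ≤ n * exp (-(11 / 24 * (p * (1 - p)) * t ^ 2)) ^ (n - 1) *
          ‖bernoulliChar p t - Complex.exp (bernoulliCumulant p t)‖ :=
        norm_pow_sub_pow_le hchar hcexp n
    _ ≤ n * exp (-(9 / 20 * (n * (p * (1 - p)))) * t ^ 2) *
          (p * (1 - p) * (1 * t ^ 4 / 24 + t ^ 5 / 10)) := by
        gcongr
        · exact exp_neg_mul_sq_pow_pred_le hn hv0 t
        · refine (norm_bernoulliChar_sub_cexp_bernoulliCumulant_le hp0 hp1 ht0.le ht1).trans ?_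
          gcongr
    _ = _ := by ring_nf

lemma norm_latticeKernel_sub_gaussianKernel_le :
    ‖latticeKernel n p t - gaussianKernel (n * p * (1 - p)) t‖ ≤
      (t / 23 + n * p * (1 - p) * (t ^ 3 / 24 + t ^ 4 / 10)) *
          exp (-(9 / 20 * (n * p * (1 - p))) * t ^ 2) +
        n * p * (1 - p) * |1 - 2 * p| * t ^ 2 / 6 * exp (-(n * p * (1 - p) / 2) * t ^ 2) := by
  have htπ : t ∈ Ioc 0 π := ⟨ht0, ht1.trans (by linarith [pi_gt_three])⟩
  have hdecomp : latticeKernel n p t - gaussianKernel (n * p * (1 - p)) t =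
      bernoulliChar p t ^ n * ((2 * sin (t / 2))⁻¹ - t⁻¹ : ℝ) +
      ((bernoulliChar p t ^ n - Complex.exp (n * bernoulliCumulant p t)) * (t⁻¹ : ℝ) +
      (Complex.exp (n * bernoulliCumulant p t) - (exp (-(n * p * (1 - p) / 2) * t ^ 2) : ℝ)) *
        (t⁻¹ : ℝ)) := by
    rw [latticeKernel, indicator_of_mem htπ, gaussianKernel]
    push_cast
    ring
  have hinv : ‖((t⁻¹ : ℝ) : ℂ)‖ = t⁻¹ := Complex.norm_of_nonneg (inv_nonneg.2 ht0.le)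
  rw [hdecomp]
  refine (norm_add_le_of_le le_rfl (norm_add_le _ _)).trans ?_
  rw [norm_mul, norm_mul, norm_mul, hinv, Complex.norm_real, norm_eq_abs]
  calc _ ≤ exp (-(9 / 20 * (n * p * (1 - p))) * t ^ 2) * (t / 23) +
        (n * p * (1 - p) * (t ^ 4 / 24 + t ^ 5 / 10) *
          exp (-(9 / 20 * (n * p * (1 - p))) * t ^ 2) * t⁻¹ +
        n * p * (1 - p) * |1 - 2 * p| * t ^ 3 / 6 * exp (-(n * p * (1 - p) / 2) * t ^ 2) *
          t⁻¹) := by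
        gcongr
        · exact norm_bernoulliChar_pow_le hn hp0 hp1 ht0 ht1
        · exact abs_inv_two_sin_half_sub_inv_le ht0 ht1
        · exact norm_bernoulliChar_pow_sub_cexp_le hn hp0 hp1 ht0 ht1
        · exact norm_cexp_nat_mul_bernoulliCumulant_sub_le n hp0 hp1 ht0.le
    _ = _ := by
        field_simp
        ring

end SmallFrequency

lemma div_pi_le_sin_half {t : ℝ} (ht0 : 0 ≤ t) (htπ : t ≤ π) : t / π ≤ sin (t / 2) :=
  calc t / π = 2 / π * (t / 2) := by ring
    _ ≤ sin (t / 2) := mul_le_sin (by linarith) (by linarith)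

lemma norm_latticeKernel_le (n : ℕ) {p t : ℝ} (hp0 : 0 ≤ p) (hp1 : p ≤ 1) (ht : 1 ≤ t) :
    ‖latticeKernel n p t‖ ≤ 2 * (t ^ 5 * exp (-(n * p * (1 - p) / 5) * t ^ 2)) := by
  have : 0 ≤ 1 - p := sub_nonneg.2 hp1
  by_cases htπ : t ∈ Ioc 0 π
  swap
  · rw [latticeKernel, indicator_of_notMem htπ, norm_zero]
    positivity
  have hsin : 19 / 60 * t ≤ sin (t / 2) :=
    calc 19 / 60 * t ≤ t / π := by
          rw [le_div_iff₀ pi_pos]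
          nlinarith [pi_lt_d2]
      _ ≤ sin (t / 2) := div_pi_le_sin_half htπ.1.le htπ.2
  have hsq : t ^ 2 / 10 ≤ sin (t / 2) ^ 2 :=
    calc t ^ 2 / 10 ≤ (19 / 60 * t) ^ 2 := by linarith [sq_nonneg t]
      _ ≤ sin (t / 2) ^ 2 := by gcongr
  have hpos : 0 < 2 * sin (t / 2) := by linarith
  have ht5 : 1 ≤ t ^ 5 := one_le_pow₀ ht
  rw [latticeKernel, indicator_of_mem htπ, norm_div, norm_pow, Complex.norm_of_nonneg hpos.le,
    div_le_iff₀ hpos]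
  calc ‖bernoulliChar p t‖ ^ n
      ≤ exp (-(2 * (p * (1 - p)) * sin (t / 2) ^ 2)) ^ n := by
        gcongr
        exact norm_bernoulliChar_le p t
    _ ≤ exp (-(2 * (p * (1 - p)) * (t ^ 2 / 10))) ^ n := by gcongr
    _ = exp (-(n * p * (1 - p) / 5) * t ^ 2) := by
        rw [← exp_nat_mul]
        ring_nf
    _ ≤ exp (-(n * p * (1 - p) / 5) * t ^ 2) * (t ^ 5 * (2 * (2 * sin (t / 2)))) :=
        le_mul_of_one_le_right (exp_pos _).le (one_le_mul_of_one_le_of_one_le ht5 (by linarith))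
    _ = _ := by ring

lemma norm_gaussianKernel_le {V t : ℝ} (hV : 0 ≤ V) (ht : 1 ≤ t) :
    ‖gaussianKernel V t‖ ≤ t ^ 5 * exp (-(V / 5) * t ^ 2) := by
  rw [gaussianKernel, Complex.norm_of_nonneg (by positivity)]
  calc exp (-(V / 2) * t ^ 2) / t ≤ exp (-(V / 2) * t ^ 2) := div_le_self (exp_pos _).le ht
    _ ≤ exp (-(V / 5) * t ^ 2) := by
        gcongr
        norm_num
    _ ≤ t ^ 5 * exp (-(V / 5) * t ^ 2) :=
        le_mul_of_one_le_left (exp_pos _).le (one_le_pow₀ ht)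

/-- An integrable majorant of the difference between the Fourier kernels of the binomial law with
parameter `p` and variance `V` and of the normal law. Apart from the leading term, which carries
the skewness, all powers of `t` are odd, so that their Gaussian moments are rational in `V`. -/
noncomputable def fourierMajorant (V p t : ℝ) : ℝ :=
  1 / 23 * (t ^ 1 * exp (-(9 / 20 * V) * t ^ 2)) +
  V / 23 * (t ^ 3 * exp (-(9 / 20 * V) * t ^ 2)) +
  7 / 5 * V * (t ^ 5 * exp (-(9 / 20 * V) * t ^ 2)) +
  V * |1 - 2 * p| / 6 * (t ^ 2 * exp (-(V / 2) * t ^ 2)) +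
  3 * (t ^ 5 * exp (-(V / 5) * t ^ 2))

lemma norm_latticeKernel_sub_gaussianKernel_le_fourierMajorant {n : ℕ} (hn : 55 ≤ n) {p t : ℝ}
    (hp0 : 0 ≤ p) (hp1 : p ≤ 1) (ht0 : 0 < t) :
    ‖latticeKernel n p t - gaussianKernel (n * p * (1 - p)) t‖ ≤
      fourierMajorant (n * p * (1 - p)) p t := by
  have hV : 0 ≤ n * p * (1 - p) := mul_nonneg (by positivity) (sub_nonneg.2 hp1)
  rcases le_total t 1 with ht1 | ht1
  · refine (norm_latticeKernel_sub_gaussianKernel_le hn hp0 hp1 ht0 ht1).trans ?_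
    generalize n * p * (1 - p) = V at hV
    have hamgm : t ^ 3 / 24 + t ^ 4 / 10 ≤ t ^ 3 / 23 + 7 / 5 * t ^ 5 := by
      linarith [mul_nonneg (pow_nonneg ht0.le 3) (sq_nonneg (t - 1 / 28)), pow_pos ht0 3]
    calc _ ≤ (t / 23 + V * (t ^ 3 / 23 + 7 / 5 * t ^ 5)) * exp (-(9 / 20 * V) * t ^ 2) +
          V * |1 - 2 * p| * t ^ 2 / 6 * exp (-(V / 2) * t ^ 2) +
          3 * (t ^ 5 * exp (-(V / 5) * t ^ 2)) := by
          refine le_add_of_le_of_nonneg ?_ (by positivity)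
          gcongr
      _ = fourierMajorant V p t := by rw [fourierMajorant]; ring
  · have hlattice := norm_latticeKernel_le n hp0 hp1 ht1
    have hgauss := norm_gaussianKernel_le hV ht1
    refine (norm_sub_le_of_le hlattice hgauss).trans ?_
    generalize n * p * (1 - p) = V at hV
    rw [← add_one_mul, fourierMajorant]
    norm_num only
    exact le_add_of_nonneg_left (by positivity)

/-! ### The error integral -/

lemma integrableOn_const_mul_pow_mul_exp_neg_mul_sq {c : ℝ} (hc : 0 < c) (a : ℝ) (k : ℕ) :
    IntegrableOn (fun t : ℝ => a * (t ^ k * exp (-c * t ^ 2))) (Ioi 0) := by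
  have hmoment := integrableOn_rpow_mul_exp_neg_mul_sq hc (neg_one_lt_zero.trans_le k.cast_nonneg)
  simp only [rpow_natCast] at hmoment
  exact hmoment.const_mul a

lemma integral_pow_mul_exp_neg_mul_sq {c : ℝ} (hc : 0 < c) (k : ℕ) :
    ∫ t in Ioi (0 : ℝ), t ^ k * exp (-c * t ^ 2) =
      c ^ (-((k : ℝ) + 1) / 2) * (1 / 2) * Gamma ((k + 1) / 2) := by
  simpa only [rpow_natCast, rpow_two] using
    integral_rpow_mul_exp_neg_mul_rpow two_pos (neg_one_lt_zero.trans_le k.cast_nonneg) hc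

lemma integral_pow_odd_mul_exp_neg_mul_sq {c : ℝ} (hc : 0 < c) (k : ℕ) :
    ∫ t in Ioi (0 : ℝ), t ^ (2 * k + 1) * exp (-c * t ^ 2) =
      k.factorial / (2 * c ^ (k + 1)) := by
  have hhalf : (((2 * k + 1 : ℕ) : ℝ) + 1) / 2 = (k + 1 : ℕ) := by
    push_cast
    ring
  rw [integral_pow_mul_exp_neg_mul_sq hc, neg_div, hhalf, rpow_neg hc.le, rpow_natCast,
    Nat.cast_succ, Gamma_nat_eq_factorial]
  field_simp

lemma integral_sq_mul_exp_neg_half_mul_sq {V : ℝ} (hV : 0 < V) :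
    ∫ t in Ioi (0 : ℝ), t ^ 2 * exp (-(V / 2) * t ^ 2) = π * (√(2 * π))⁻¹ / (V * √V) := by
  have hhalf : (((2 : ℕ) : ℝ) + 1) / 2 = 1 / 2 + 1 := by norm_num
  rw [integral_pow_mul_exp_neg_mul_sq (half_pos hV), neg_div, hhalf, Gamma_add_one (by norm_num),
    Gamma_one_half_eq, rpow_neg (by positivity), rpow_add_one (by positivity), ← sqrt_eq_rpow,
    sqrt_div hV.le, sqrt_mul zero_le_two]
  field_simp
  rw [sq_sqrt pi_pos.le, sq_sqrt zero_le_two]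

lemma integrableOn_fourierMajorant {V : ℝ} (hV : 0 < V) (p : ℝ) :
    IntegrableOn (fourierMajorant V p) (Ioi 0) := by
  have h9 : 0 < 9 / 20 * V := by positivity
  have h5 : 0 < V / 5 := by positivity
  exact ((((integrableOn_const_mul_pow_mul_exp_neg_mul_sq h9 _ 1).add
    (integrableOn_const_mul_pow_mul_exp_neg_mul_sq h9 _ 3)).add
    (integrableOn_const_mul_pow_mul_exp_neg_mul_sq h9 _ 5)).add
    (integrableOn_const_mul_pow_mul_exp_neg_mul_sq (half_pos hV) _ 2)).add
    (integrableOn_const_mul_pow_mul_exp_neg_mul_sq h5 _ 5)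

lemma integral_fourierMajorant {V : ℝ} (hV : 0 < V) (p : ℝ) :
    ∫ t in Ioi 0, fourierMajorant V p t =
      π * (|1 - 2 * p| / 6 * (√(2 * π))⁻¹ / √V) +
        (290 / 1863 + 11200 / 729 / V + 375 / V ^ 2) / V := by
  have h9 : 0 < 9 / 20 * V := by positivity
  have h5 : 0 < V / 5 := by positivity
  have hint1 := integrableOn_const_mul_pow_mul_exp_neg_mul_sq h9 (1 / 23) 1
  have hint3 := integrableOn_const_mul_pow_mul_exp_neg_mul_sq h9 (V / 23) 3
  have hint5 := integrableOn_const_mul_pow_mul_exp_neg_mul_sq h9 (7 / 5 * V) 5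
  have hint2 :=
    integrableOn_const_mul_pow_mul_exp_neg_mul_sq (half_pos hV) (V * |1 - 2 * p| / 6) 2
  have hintTail := integrableOn_const_mul_pow_mul_exp_neg_mul_sq h5 3 5
  have hmoment1 := integral_pow_odd_mul_exp_neg_mul_sq h9 0
  have hmoment3 := integral_pow_odd_mul_exp_neg_mul_sq h9 1
  have hmoment5 := integral_pow_odd_mul_exp_neg_mul_sq h9 2
  have htail := integral_pow_odd_mul_exp_neg_mul_sq h5 2
  norm_num only [Nat.factorial, Nat.cast_ofNat, Nat.cast_one] at hmoment1 hmoment3 hmoment5 htail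
  simp only [fourierMajorant]
  rw [integral_add (((hint1.fun_add hint3).fun_add hint5).fun_add hint2) hintTail,
    integral_add ((hint1.fun_add hint3).fun_add hint5) hint2,
    integral_add (hint1.fun_add hint3) hint5, integral_add hint1 hint3]
  simp only [integral_const_mul, hmoment1, hmoment3, hmoment5, htail,
    integral_sq_mul_exp_neg_half_mul_sq hV]
  field_simp
  ring

/-! ### The Berry-Esseen bound -/

lemma abs_binomCDF_sub_Phi_midpoint_le {n : ℕ} (hn : 55 ≤ n) {p : ℝ} (hp0 : 0 < p) (hp1 : p < 1)
    (x : ℝ) :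
    |binomCDF n p x - Phi ((⌈x⌉ - 1 / 2 - n * p) / √(n * p * (1 - p)))| ≤
      π⁻¹ * ∫ t in Ioi 0, fourierMajorant (n * p * (1 - p)) p t := by
  have hV : 0 < n * p * (1 - p) :=
    mul_pos (mul_pos (Nat.cast_pos.2 (by omega)) hp0) (sub_pos.2 hp1)
  have hgauss := integrableOn_exp_neg_mul_sq_mul_sin_div (half_pos hV) (⌈x⌉ - 1 / 2 - n * p)
  rw [← im_cexp_mul_gaussianKernel] at hgauss
  rw [binomCDF_eq_integral, Phi_div_sqrt_eq_integral hV, add_sub_add_left_eq_sub, ← mul_sub,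
    ← integral_sub (integrableOn_im_cexp_mul_latticeKernel n p x) hgauss, abs_mul,
    abs_of_pos (inv_pos.2 pi_pos)]
  gcongr
  rw [← norm_eq_abs]
  refine norm_integral_le_of_norm_le (integrableOn_fourierMajorant hV p)
    ((ae_restrict_mem measurableSet_Ioi).mono fun t ht => ?_)
  rw [← Complex.sub_im, ← mul_sub]
  refine (Complex.abs_im_le_norm _).trans ?_
  rw [norm_mul, Complex.norm_exp_ofReal_mul_I, one_mul]
  exact norm_latticeKernel_sub_gaussianKernel_le_fourierMajorant hn hp0.le hp1.le ht

lemma abs_Phi_midpoint_sub_Phi_le (m s x : ℝ) :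
    |Phi ((⌈x⌉ - 1 / 2 - m) / s) - Phi ((x - m) / s)| ≤ (√(2 * π))⁻¹ * (1 / 2 / |s|) := by
  have hmidpoint : |(⌈x⌉ - 1 / 2 - m) - (x - m)| ≤ 1 / 2 :=
    abs_le.2 ⟨by linarith [Int.le_ceil x], by linarith [Int.ceil_lt_add_one x]⟩
  refine (abs_Phi_sub_Phi_le _ _).trans ?_
  rw [← sub_div, abs_div]
  gcongr

lemma inv_pi_mul_integral_fourierMajorant_le {V : ℝ} (hV : 1000 ≤ V) (p : ℝ) :
    π⁻¹ * ∫ t in Ioi 0, fourierMajorant V p t ≤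
      |1 - 2 * p| / 6 * (√(2 * π))⁻¹ / √V + 0.05532 / V := by
  have hV0 : 0 < V := by linarith
  have hconst : 290 / 1863 + 11200 / 729 / V + 375 / V ^ 2 ≤ π * 0.05532 :=
    calc 290 / 1863 + 11200 / 729 / V + 375 / V ^ 2
        ≤ 290 / 1863 + 11200 / 729 / 1000 + 375 / 1000 ^ 2 := by gcongr
      _ ≤ 3.14 * 0.05532 := by norm_num
      _ ≤ π * 0.05532 := by gcongr; exact pi_gt_d2.le
  rw [integral_fourierMajorant hV0, inv_mul_le_iff₀ pi_pos, mul_add, ← mul_div_assoc π 0.05532]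
  gcongr

theorem Delta_le_E1_div_sigma_general {n : ℕ} {p : ℝ} (hV : 1000 ≤ n * p * (1 - p)) :
    Delta n p ≤
      ((1 + max p (1 - p)) / (3 * √(2 * π))) / √(n * p * (1 - p)) +
        0.05532 / (n * p * (1 - p)) := by
  have hpq : 0 < p * (1 - p) := by
    have hnpq : 0 < n * (p * (1 - p)) := by linarith
    exact pos_of_mul_pos_right hnpq n.cast_nonneg
  have hp0 : 0 < p := by nlinarith
  have hp1 : p < 1 := by nlinarith
  have hn : 55 ≤ n := by
    have hn' : (55 : ℝ) ≤ n := by linarith [mul_nonneg n.cast_nonneg (sq_nonneg (1 - 2 * p))]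
    exact_mod_cast hn'
  have hmax : 1 + max p (1 - p) = (3 + |1 - 2 * p|) / 2 := by
    rcases le_total p (1 - p) with hle | hle
    · rw [max_eq_right hle, abs_of_nonneg (by linarith)]
      ring
    · rw [max_eq_left hle, abs_of_nonpos (by linarith)]
      ring
  refine ciSup_le fun x => ?_
  calc _ ≤ _ := abs_sub_le _ (Phi ((⌈x⌉ - 1 / 2 - n * p) / √(n * p * (1 - p)))) _
    _ ≤ (|1 - 2 * p| / 6 * (√(2 * π))⁻¹ / √(n * p * (1 - p)) + 0.05532 / (n * p * (1 - p))) +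
          (√(2 * π))⁻¹ * (1 / 2 / |√(n * p * (1 - p))|) :=
        add_le_add ((abs_binomCDF_sub_Phi_midpoint_le hn hp0 hp1 x).trans
          (inv_pi_mul_integral_fourierMajorant_le hV p)) (abs_Phi_midpoint_sub_Phi_le _ _ x)
    _ = _ := by
        rw [hmax, abs_of_nonneg (sqrt_nonneg _)]
        ring

/-- For all `p ∈ [0.1689, 0.5]` and all integers `n ≥ 500000`,
`Δ_n(p) ≤ ℰ₁(p)/σ + 0.05532/σ²` where `σ = √(npq)` and
`ℰ₁(p) = (2 − p)/(3√(2π))`. -/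
theorem Delta_le_E1_div_sigma (p : ℝ) (hp : p ∈ Set.Icc (0.1689 : ℝ) 0.5)
    (n : ℕ) (hn : 500000 ≤ n) :
    Delta n p ≤
      ((2 - p) / (3 * Real.sqrt (2 * Real.pi))) / Real.sqrt (n * p * (1 - p)) +
        0.05532 / (n * p * (1 - p)) := by
  have hle : p ≤ 1 - p := by linarith [hp.2]
  have hpq : 7 / 50 ≤ p * (1 - p) := by nlinarith [hp.1, hp.2]
  have hn' : (500000 : ℝ) ≤ n := by exact_mod_cast hn
  have hV : 1000 ≤ n * p * (1 - p) := by nlinarith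
  simpa only [max_eq_right hle, ← add_sub_assoc, one_add_one_eq_two] using
    Delta_le_E1_div_sigma_general hV
end
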